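/- arXiv:2404.11444 — 11 statements merged into one kernel-verified Lean document; each statement's English description precedes it below -/
import Mathlib

section
/- Let m, j be positive natural numbers and let σ be a permutation of the set (Fin m) × (Fin j), thought of as the positions of a rectangle with m columns each containing j cells. Then there exists a marking function f : (Fin m) × (Fin j) → Fin j such that: (i) for every column c : Fin m, the map r ↦ f (c, r) is a bijection of Fin j (each column carries every marker exactly once), and (ii) for every column c' : Fin m, the map r ↦ f (σ (c', r)) is a bijection of Fin j (the images under σ of the cells of each column carry every marker exactly once). -/
/-!
Given two partitions of a finite set `E` into blocks of equal size, view each element of `E` as an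
edge joining the block of the first partition that contains it to the block of the second. This is
a regular bipartite multigraph, and a marking that is bijective on every block of both partitions
is a decomposition of its edges into perfect matchings. König's edge colouring theorem provides
one: Hall's theorem yields a perfect matching, and removing it leaves a regular multigraph of
smaller degree.
-/

open Finset

/-- One side of the regularity of a bipartite multigraph with edge set `S`: every vertex `v` of the
side reached by the endpoint map `p` lies on exactly `k` edges. The multigraph with endpoint maps
`a` and `b` is `k`-regular when this holds for both maps, and a perfect matching is the case
`k = 1`. -/
def IsRegularAlong {E V : Type*} [DecidableEq V] (p : E → V) (S : Finset E) (k : ℕ) : Prop :=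
  ∀ v, #{e ∈ S | p e = v} = k

namespace IsRegularAlong

variable {E V κ : Type*} [DecidableEq V]

section OneSide

variable {p : E → V} {S M : Finset E} {k l : ℕ}

lemma card_filter_mem (h : IsRegularAlong p S k) (A : Finset V) :
    #{e ∈ S | p e ∈ A} = #A * k := by
  rw [← sum_card_fiberwise_eq_card_filter, sum_const_nat fun v _ => h v]

lemma card_eq [Fintype V] (h : IsRegularAlong p S k) : #S = Fintype.card V * k := by
  simpa using h.card_filter_mem univ

lemma eq_empty (h : IsRegularAlong p S 0) : S = ∅ :=
  eq_empty_of_forall_notMem fun e he =>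
    filter_eq_empty_iff.1 (card_eq_zero.1 (h (p e))) he rfl

lemma finite (h : IsRegularAlong p S k) (hk : 0 < k) : Finite V := by
  refine Finite.of_surjective (fun e : S => p e) fun v => ?_
  obtain ⟨e, he⟩ := card_pos.1 (hk.trans_eq (h v).symm)
  exact ⟨⟨e, (mem_filter.1 he).1⟩, (mem_filter.1 he).2⟩

lemma sdiff [DecidableEq E] (hS : IsRegularAlong p S (k + l)) (hM : IsRegularAlong p M l)
    (hMS : M ⊆ S) : IsRegularAlong p (S \ M) k := fun v => by
  have hfiber : ({e ∈ S \ M | p e = v} : Finset E) = {e ∈ S | p e = v} \ {e ∈ M | p e = v} := by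
    grind
  rw [hfiber, card_sdiff_of_subset (filter_subset_filter _ hMS), hS v, hM v, Nat.add_sub_cancel]

lemma one_iff_existsUnique : IsRegularAlong p S 1 ↔ ∀ v, ∃! e, e ∈ S ∧ p e = v := by
  simp only [IsRegularAlong, card_eq_one, singleton_iff_unique_mem, mem_filter]

lemma image_of_bijective [DecidableEq E] {α : Type*} [Fintype α] {s : α → E}
    (hs : Function.Bijective fun x => p (s x)) : IsRegularAlong p (univ.image s) 1 := by
  refine one_iff_existsUnique.2 fun v => ?_
  obtain ⟨x, rfl⟩ := hs.surjective v
  refine ⟨s x, ⟨mem_image_of_mem s (mem_univ x), rfl⟩, ?_⟩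
  rintro e ⟨he, hex⟩
  obtain ⟨y, -, rfl⟩ := mem_image.1 he
  rw [hs.injective hex]

end OneSide

section TwoSides

variable {W : Type*} [DecidableEq W] {a : E → V} {b : E → W} {S : Finset E} {k : ℕ}

lemma card_le_card_neighbors (ha : IsRegularAlong a S k) (hb : IsRegularAlong b S k) (hk : 0 < k)
    (A : Finset V) : #A ≤ #(A.biUnion fun v => image b {e ∈ S | a e = v}) := by
  set N := A.biUnion fun v => image b {e ∈ S | a e = v}
  have hAN : ({e ∈ S | a e ∈ A} : Finset E) ⊆ {e ∈ S | b e ∈ N} := by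
    grind
  refine Nat.le_of_mul_le_mul_right ?_ hk
  calc #A * k = #{e ∈ S | a e ∈ A} := (ha.card_filter_mem A).symm
    _ ≤ #{e ∈ S | b e ∈ N} := card_le_card hAN
    _ = #N * k := hb.card_filter_mem N

theorem exists_perfect_matching (ha : IsRegularAlong a S k) (hb : IsRegularAlong b S k)
    (hk : 0 < k) : ∃ M ⊆ S, IsRegularAlong a M 1 ∧ IsRegularAlong b M 1 := by
  classical
  have := ha.finite hk
  have := hb.finite hk
  cases nonempty_fintype V
  cases nonempty_fintype W
  obtain ⟨g, hg_inj, hg⟩ := (all_card_le_biUnion_card_iff_exists_injective _).1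
    (card_le_card_neighbors ha hb hk)
  have hcard : Fintype.card V = Fintype.card W :=
    Nat.eq_of_mul_eq_mul_right hk (ha.card_eq.symm.trans hb.card_eq)
  have hg_bij : Function.Bijective g :=
    (Fintype.bijective_iff_injective_and_card g).2 ⟨hg_inj, hcard⟩
  simp only [mem_image, mem_filter] at hg
  choose s hs hbs using hg
  refine ⟨univ.image s, image_subset_iff.2 fun v _ => (hs v).1,
    image_of_bijective ?_, image_of_bijective ?_⟩
  · simp only [(hs _).2]
    exact Function.bijective_id
  · simpa only [hbs] using hg_bij

theorem exists_edge_coloring [DecidableEq κ] [Nonempty κ] (C : Finset κ)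
    (ha : IsRegularAlong a S #C) (hb : IsRegularAlong b S #C) :
    ∃ f : E → κ, (∀ e ∈ S, f e ∈ C) ∧
      ∀ i ∈ C, IsRegularAlong a {e ∈ S | f e = i} 1 ∧ IsRegularAlong b {e ∈ S | f e = i} 1 := by
  classical
  induction C using Finset.induction_on generalizing S with
  | empty => exact ⟨fun _ => Classical.arbitrary κ, by simp [ha.eq_empty]⟩
  | insert i C hi ih =>
    rw [card_insert_of_notMem hi] at ha hb
    obtain ⟨M, hMS, haM, hbM⟩ := exists_perfect_matching ha hb (Nat.succ_pos _)
    obtain ⟨f, hfC, hf⟩ := ih (ha.sdiff haM hMS) (hb.sdiff hbM hMS)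
    have hM_class : ({e ∈ S | (if e ∈ M then i else f e) = i} : Finset E) = M := by
      grind
    have hC_class : ∀ c ∈ C, ({e ∈ S | (if e ∈ M then i else f e) = c} : Finset E) =
        {e ∈ S \ M | f e = c} := by
      grind
    refine ⟨fun e => if e ∈ M then i else f e, by grind, forall_mem_insert _ _ _ |>.2 ⟨?_, ?_⟩⟩
    · rw [hM_class]
      exact ⟨haM, hbM⟩
    · intro c hc
      rw [hC_class c hc]
      exact hf c hc

end TwoSides

section Blocks

variable {ι : Type*} [DecidableEq ι] [Fintype E] (τ : ι × κ ≃ E)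

lemma fst_symm [Fintype κ] : IsRegularAlong (fun e => (τ.symm e).1) univ (Fintype.card κ) := by
  intro c
  have hblock : ({e | (τ.symm e).1 = c} : Finset E) = univ.map
      ⟨fun r => τ (c, r), τ.injective.comp (Prod.mk_right_injective c)⟩ := by
    ext e
    simp [← Equiv.eq_symm_apply, Prod.ext_iff, eq_comm (a := c)]
  rw [hblock, card_map, card_univ]

lemma bijective_on_block [DecidableEq κ] {f : E → κ}
    (h : ∀ i, IsRegularAlong (fun e => (τ.symm e).1) {e | f e = i} 1) (c : ι) :
    Function.Bijective fun r => f (τ (c, r)) := by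
  refine (Function.bijective_iff_existsUnique _).2 fun i => ?_
  obtain ⟨e, ⟨he, rfl⟩, huniq⟩ := one_iff_existsUnique.1 (h i) c
  refine ⟨(τ.symm e).2, by simpa using he, fun r hr => ?_⟩
  rw [← huniq (τ ((τ.symm e).1, r)) (by simpa using hr), Equiv.symm_apply_apply]

end Blocks

end IsRegularAlong

theorem rectangle_marking_exists_general {E ι ι' κ : Type*} [Finite E] [Finite κ] [Nonempty κ]
    (τ : ι × κ ≃ E) (τ' : ι' × κ ≃ E) :
    ∃ f : E → κ,
      (∀ c, Function.Bijective fun r => f (τ (c, r))) ∧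
      (∀ c', Function.Bijective fun r => f (τ' (c', r))) := by
  classical
  cases nonempty_fintype E
  cases nonempty_fintype κ
  obtain ⟨f, -, hf⟩ := IsRegularAlong.exists_edge_coloring (univ : Finset κ)
    (IsRegularAlong.fst_symm τ) (IsRegularAlong.fst_symm τ')
  exact ⟨f, IsRegularAlong.bijective_on_block τ fun i => (hf i (mem_univ i)).1,
    IsRegularAlong.bijective_on_block τ' fun i => (hf i (mem_univ i)).2⟩

/-- For any permutation `σ` of the cells of an `m × j` rectangle (with `m` columns of `j`
cells each), there is a marking `f` of the cells by markers in `Fin j` such that every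
column carries every marker exactly once, and for every column, the images under `σ` of its
cells carry every marker exactly once. -/
theorem rectangle_marking_exists (m j : ℕ) (hm : 0 < m) (hj : 0 < j)
    (σ : Equiv.Perm (Fin m × Fin j)) :
    ∃ f : Fin m × Fin j → Fin j,
      (∀ c : Fin m, Function.Bijective fun r : Fin j => f (c, r)) ∧
      (∀ c' : Fin m, Function.Bijective fun r : Fin j => f (σ (c', r))) :=
  have : Nonempty (Fin j) := ⟨⟨0, hj⟩⟩
  rectangle_marking_exists_general (Equiv.refl _) σ
end

section
/- Let d be a positive natural number and let P_S, P_A be d × d complex matrices that are Hermitian idempotents (orthogonal projections) with P_S + P_A = 1 and P_S * P_A = 0. Set S = P_S - P_A, and for β : ℝ set S_β = P_S + exp(i π β) • P_A. Let σ > 0 and let γ be the Gaussian probability measure on ℝ with mean 1 and variance σ². Then for every d × d complex matrix ρ, ∫ S_β * ρ * (S_β)ᴴ dγ(β) = p • ρ + (1 - p) • (S * ρ * S), where p = (1 - exp(-π² σ² / 2)) / 2 and (·)ᴴ denotes conjugate transpose. -/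
/-!
For `|z| = 1`, the product `(P + z Q) ρ (P + z Q)ᴴ` is affine in the pair `(z, z̄)`, so its average
over a random phase depends only on the mean of `z`. When that mean is real, it is also the mean
`2p - 1` of a random sign, equal to `1` with probability `p` and to `-1` with probability `1 - p`;
the average is therefore the mixture, with these weights, of the values at `z = 1` and `z = -1`.
For `z = e^{iπβ}` with `β` Gaussian of mean `1` and variance `v`, the mean of `z` is the
characteristic function at `π`, namely `e^{iπ} e^{-π²v/2} = -e^{-π²v/2}`.
-/

open MeasureTheory ProbabilityTheory Matrix

attribute [local instance] Matrix.normedAddCommGroup Matrix.normedSpace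

theorem add_smul_mul_mul_conjTranspose_add_smul {m n R : Type*} [Fintype n]
    [CommSemiring R] [StarRing R] (P Q : Matrix m n R) (ρ : Matrix n n R) {z : R}
    (hz : star z * z = 1) :
    (P + z • Q) * ρ * (P + z • Q)ᴴ =
      P * ρ * Pᴴ + Q * ρ * Qᴴ + z • (Q * ρ * Pᴴ) + star z • (P * ρ * Qᴴ) := by
  simp only [conjTranspose_add, conjTranspose_smul, Matrix.add_mul, Matrix.mul_add,
    Matrix.smul_mul, Matrix.mul_smul, smul_add, smul_smul, hz, one_smul]
  abel

section RandomPhase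

variable {Ω 𝕜 : Type*} [MeasurableSpace Ω] {μ : Measure Ω} [IsProbabilityMeasure μ] [RCLike 𝕜]
  {z : Ω → 𝕜}

/- On matrices, `Integrable` picks up the product topology, and instance resolution fails to match it
with that of the chosen norm; integrability is therefore handled in an abstract normed space. -/
theorem integral_add_smul_add_star_smul {E : Type*} [NormedAddCommGroup E] [NormedSpace ℝ E]
    [NormedSpace 𝕜 E] [CompleteSpace E] (hz : Integrable z μ) (a b c : E) :
    ∫ ω, (a + z ω • b + star (z ω) • c) ∂μ =
      a + (∫ ω, z ω ∂μ) • b + star (∫ ω, z ω ∂μ) • c := by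
  have hab : Integrable (fun ω => a + z ω • b) μ := (integrable_const a).add (hz.smul_const b)
  have hc : Integrable (fun ω => star (z ω) • c) μ :=
    (RCLike.conjLIE.integrable_comp_iff.2 hz).smul_const c
  have hstar : ∫ ω, star (z ω) ∂μ = star (∫ ω, z ω ∂μ) := integral_conj
  rw [integral_add hab hc, integral_add (integrable_const a) (hz.smul_const b),
    integral_smul_const, integral_smul_const, hstar, integral_const, probReal_univ, one_smul]

theorem integral_add_smul_mul_mul_conjTranspose_add_smul {m n : Type*} [Fintype m] [Fintype n]
    (P Q : Matrix m n 𝕜) (ρ : Matrix n n 𝕜) (hz : AEStronglyMeasurable z μ)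
    (hnorm : ∀ᵐ ω ∂μ, ‖z ω‖ = 1) {p : ℝ} (hp : ∫ ω, z ω ∂μ = ((2 * p - 1 : ℝ) : 𝕜)) :
    ∫ ω, (P + z ω • Q) * ρ * (P + z ω • Q)ᴴ ∂μ =
      p • ((P + Q) * ρ * (P + Q)ᴴ) + (1 - p) • ((P - Q) * ρ * (P - Q)ᴴ) := by
  have hint : Integrable z μ := .of_bound hz 1 (hnorm.mono fun _ h => h.le)
  have hexpand : ∀ᵐ ω ∂μ, (P + z ω • Q) * ρ * (P + z ω • Q)ᴴ =
      P * ρ * Pᴴ + Q * ρ * Qᴴ + z ω • (Q * ρ * Pᴴ) + star (z ω) • (P * ρ * Qᴴ) := by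
    filter_upwards [hnorm] with ω hω
    refine add_smul_mul_mul_conjTranspose_add_smul P Q ρ ?_
    rw [RCLike.star_def, RCLike.conj_mul, hω, RCLike.ofReal_one, one_pow]
  have hmean : star (∫ ω, z ω ∂μ) = ((2 * p - 1 : ℝ) : 𝕜) := by
    rw [hp, RCLike.star_def, RCLike.conj_ofReal]
  have hadd : (P + Q) * ρ * (P + Q)ᴴ =
      P * ρ * Pᴴ + Q * ρ * Qᴴ + Q * ρ * Pᴴ + P * ρ * Qᴴ := by
    simpa using add_smul_mul_mul_conjTranspose_add_smul P Q ρ (z := 1) (by simp)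
  have hsub : (P - Q) * ρ * (P - Q)ᴴ =
      P * ρ * Pᴴ + Q * ρ * Qᴴ - Q * ρ * Pᴴ - P * ρ * Qᴴ := by
    simpa [← sub_eq_add_neg] using
      add_smul_mul_mul_conjTranspose_add_smul P Q ρ (z := -1) (by simp)
  calc ∫ ω, (P + z ω • Q) * ρ * (P + z ω • Q)ᴴ ∂μ
      = P * ρ * Pᴴ + Q * ρ * Qᴴ + (∫ ω, z ω ∂μ) • (Q * ρ * Pᴴ)
          + star (∫ ω, z ω ∂μ) • (P * ρ * Qᴴ) :=
        (integral_congr_ae hexpand).trans (integral_add_smul_add_star_smul hint _ _ _)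
    _ = P * ρ * Pᴴ + Q * ρ * Qᴴ + (2 * p - 1) • (Q * ρ * Pᴴ)
          + (2 * p - 1) • (P * ρ * Qᴴ) := by
        rw [hmean, hp, ← RCLike.real_smul_eq_coe_smul, ← RCLike.real_smul_eq_coe_smul]
    _ = p • ((P + Q) * ρ * (P + Q)ᴴ) + (1 - p) • ((P - Q) * ρ * (P - Q)ᴴ) := by
        rw [hadd, hsub]
        module

end RandomPhase

theorem integral_cexp_I_mul_pi_mul_gaussianReal_one (v : NNReal) :
    ∫ β : ℝ, Complex.exp (Complex.I * Real.pi * β) ∂(gaussianReal 1 v) =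
      ((-Real.exp (-(Real.pi ^ 2 * v) / 2) : ℝ) : ℂ) := by
  calc ∫ β : ℝ, Complex.exp (Complex.I * Real.pi * β) ∂(gaussianReal 1 v)
      = charFun (gaussianReal 1 v) Real.pi := by
        simp only [charFun_apply_real, mul_comm, mul_left_comm]
    _ = Complex.exp (Real.pi * Complex.I) * Complex.exp (-(Real.pi ^ 2 * v) / 2) := by
        rw [charFun_gaussianReal, ← Complex.exp_add]
        push_cast
        ring_nf
    _ = ((-Real.exp (-(Real.pi ^ 2 * v) / 2) : ℝ) : ℂ) := by
        rw [Complex.exp_pi_mul_I]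
        push_cast
        ring

theorem faulty_swap_gaussian_average_general {m n : Type*} [Fintype m] [Fintype n]
    (P Q : Matrix m n ℂ) (v : NNReal) (ρ : Matrix n n ℂ) :
    ∫ β : ℝ, (P + Complex.exp (Complex.I * Real.pi * β) • Q) * ρ *
        (P + Complex.exp (Complex.I * Real.pi * β) • Q)ᴴ ∂(gaussianReal 1 v) =
      ((1 - Real.exp (-(Real.pi ^ 2 * v) / 2)) / 2) • ((P + Q) * ρ * (P + Q)ᴴ) +
        (1 - (1 - Real.exp (-(Real.pi ^ 2 * v) / 2)) / 2) • ((P - Q) * ρ * (P - Q)ᴴ) := by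
  have hmean : ∫ β : ℝ, Complex.exp (Complex.I * Real.pi * β) ∂(gaussianReal 1 v) =
      ((2 * ((1 - Real.exp (-(Real.pi ^ 2 * v) / 2)) / 2) - 1 : ℝ) : ℂ) := by
    rw [integral_cexp_I_mul_pi_mul_gaussianReal_one]
    congr 1
    ring
  have hnorm (β : ℝ) : ‖Complex.exp (Complex.I * Real.pi * β)‖ = 1 := by
    simp [Complex.norm_exp]
  exact integral_add_smul_mul_mul_conjTranspose_add_smul P Q ρ (by fun_prop)
    (.of_forall hnorm) hmean

/-- Averaging a faulty SWAP gate `S^β = P_S + e^{iπβ} P_A` over a Gaussian pulse exponent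
`β` with mean `1` and variance `σ²` yields the probabilistic mixture
`p • ρ + (1 - p) • (S ρ S)` with `p = (1 - e^{-π²σ²/2})/2`. -/
theorem faulty_swap_gaussian_average (d : ℕ) (hd : 0 < d)
    (PS PA : Matrix (Fin d) (Fin d) ℂ)
    (hPSherm : PS.IsHermitian) (hPAherm : PA.IsHermitian)
    (hPSidem : PS * PS = PS) (hPAidem : PA * PA = PA)
    (hsum : PS + PA = 1) (horth : PS * PA = 0)
    (σ : ℝ) (hσ : 0 < σ) (ρ : Matrix (Fin d) (Fin d) ℂ) :
    (∫ β : ℝ,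
        (PS + Complex.exp (Complex.I * Real.pi * β) • PA) * ρ *
          (PS + Complex.exp (Complex.I * Real.pi * β) • PA)ᴴ
      ∂(gaussianReal 1 ⟨σ ^ 2, sq_nonneg σ⟩))
    = ((1 - Real.exp (-(Real.pi ^ 2 * σ ^ 2) / 2)) / 2) • ρ +
        (1 - (1 - Real.exp (-(Real.pi ^ 2 * σ ^ 2) / 2)) / 2) •
          ((PS - PA) * ρ * (PS - PA)) := by
  have h := faulty_swap_gaussian_average_general PS PA ⟨σ ^ 2, sq_nonneg σ⟩ ρ
  rwa [hsum, conjTranspose_one, one_mul, mul_one, (hPSherm.sub hPAherm).eq] at h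
end

section
/- Let d ≥ 2 and let μ be the Haar probability measure on the unitary group U(d) of d × d complex matrices. Then for all indices i, j, k, l, i', j', k', l' : Fin d, ∫ U(i,i') · conj(U(j,j')) · U(k,k') · conj(U(l,l')) dμ(U) = (δ_{ij} δ_{kl} δ_{i'j'} δ_{k'l'} + δ_{il} δ_{kj} δ_{i'l'} δ_{k'j'})/(d² - 1) − (δ_{ij} δ_{kl} δ_{i'l'} δ_{k'j'} + δ_{il} δ_{kj} δ_{i'j'} δ_{k'l'})/(d(d² - 1)), where δ_{ab} equals 1 if a = b and 0 otherwise. -/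
open MeasureTheory Matrix

noncomputable instance (d : ℕ) : MeasurableSpace (Matrix.unitaryGroup (Fin d) ℂ) := borel _

instance (d : ℕ) : BorelSpace (Matrix.unitaryGroup (Fin d) ℂ) := ⟨rfl⟩

/-!
The moments are the entries of the twirls `T X = ∫ (U ⊗ U) X (U ⊗ U)⋆ dμ` of matrix units `X`.
By left invariance, `T X` commutes with every `V ⊗ V`, which forces `T X = α 1 + β F` with `F` the
flip `x ⊗ y ↦ y ⊗ x`; since `1` and `F` commute with every `U ⊗ U`, the traces of `T X` and
`F (T X)` are those of `X` and `F X`, and they determine `α` and `β`.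

That the commutant is spanned by `1` and `F` is seen by testing against a self-adjoint involution
`S`. It has the unitary square root `V = ((1 + i) 1 + (1 - i) S) / 2`, and `V ⊗ V` is a combination
of `1`, `S ⊗ S` and `S ⊗ 1 + 1 ⊗ S`, so a matrix in the commutant commutes with `S ⊗ 1 + 1 ⊗ S`.
Sign flips `S` kill all entries but the `((i, j), (i, j))` and `((i, j), (j, i))` ones, permutation
matrices make these independent of `i ≠ j`, and transpositions fix the entries `((i, i), (i, i))`.
-/

namespace Weingarten

open scoped Kronecker Matrix.Norms.L2Operator

section Twirl

variable {G A : Type*} [Group G] [MeasurableSpace G] [NormedRing A] [StarRing A]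

/-- The average of the conjugates `ρ g * X * (ρ g)⋆` of `X` under a unitary representation `ρ`. -/
noncomputable def twirl [NormedAlgebra ℝ A] (μ : Measure G) (ρ : G →* unitary A) (X : A) : A :=
  ∫ g, (ρ g : A) * X * star (ρ g : A) ∂μ

variable [CStarRing A] {μ : Measure G} {ρ : G →* unitary A}

theorem integrable_conj [IsFiniteMeasure μ] (hρ : AEStronglyMeasurable (fun g ↦ (ρ g : A)) μ)
    (X : A) : Integrable (fun g ↦ (ρ g : A) * X * star (ρ g : A)) μ := by
  refine .of_bound ((hρ.mul_const X).mul hρ.star) ‖X‖ (.of_forall fun g ↦ ?_)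
  rw [← Unitary.coe_star, CStarRing.norm_mul_coe_unitary, CStarRing.norm_coe_unitary_mul]

variable [NormedAlgebra ℝ A]

theorem commute_twirl [MeasurableMul G] [μ.IsMulLeftInvariant] [IsFiniteMeasure μ]
    (hρ : AEStronglyMeasurable (fun g ↦ (ρ g : A)) μ) (X : A) (h : G) :
    Commute (ρ h : A) (twirl μ ρ X) := by
  have hint := integrable_conj hρ X
  calc (ρ h : A) * twirl μ ρ X
      = ∫ g, (ρ h : A) * ((ρ g : A) * X * star (ρ g : A)) ∂μ :=
        (integral_const_mul_of_integrable hint).symm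
    _ = ∫ g, (ρ (h * g) : A) * X * star (ρ (h * g) : A) * (ρ h : A) ∂μ := by
        simp [mul_assoc]
    _ = ∫ g, (ρ g : A) * X * star (ρ g : A) * (ρ h : A) ∂μ :=
        integral_mul_left_eq_self (fun g ↦ (ρ g : A) * X * star (ρ g : A) * (ρ h : A)) h
    _ = twirl μ ρ X * (ρ h : A) := integral_mul_const_of_integrable hint

variable {E : Type*} [NormedAddCommGroup E] [NormedSpace ℝ E] [CompleteSpace A] [CompleteSpace E]

theorem map_twirl [IsFiniteMeasure μ] (hρ : AEStronglyMeasurable (fun g ↦ (ρ g : A)) μ)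
    (φ : A →L[ℝ] E) (X : A) :
    φ (twirl μ ρ X) = ∫ g, φ ((ρ g : A) * X * star (ρ g : A)) ∂μ :=
  (φ.integral_comp_comm (integrable_conj hρ X)).symm

theorem map_mul_twirl [IsProbabilityMeasure μ]
    (hρ : AEStronglyMeasurable (fun g ↦ (ρ g : A)) μ) (φ : A →L[ℝ] E)
    (hφ : ∀ a b, φ (a * b) = φ (b * a)) {C : A} (hC : ∀ g, Commute (ρ g : A) C) (X : A) :
    φ (C * twirl μ ρ X) = φ (C * X) := by
  have hconj (g : G) : φ (C * ((ρ g : A) * X * star (ρ g : A))) = φ (C * X) := by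
    calc φ (C * ((ρ g : A) * X * star (ρ g : A)))
        = φ (star (ρ g : A) * (C * (ρ g : A)) * X) := by rw [← mul_assoc, hφ]; simp only [mul_assoc]
      _ = φ (C * X) := by rw [← (hC g).eq]; simp [← mul_assoc]
  calc φ (C * twirl μ ρ X)
      = ∫ g, φ (C * ((ρ g : A) * X * star (ρ g : A))) ∂μ :=
        map_twirl hρ (φ.comp (ContinuousLinearMap.mul ℝ A C)) X
    _ = φ (C * X) := by simp [hconj]

end Twirl

section Swap

variable {n R : Type*} [DecidableEq n]

variable (n R) in
/-- The flip operator `x ⊗ y ↦ y ⊗ x` on the tensor square, as a matrix. -/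
def swapMatrix [Zero R] [One R] : Matrix (n × n) (n × n) R :=
  Equiv.Perm.permMatrix R (Equiv.prodComm n n)

theorem swapMatrix_apply [Zero R] [One R] (x y : n × n) :
    swapMatrix n R x y = if y = x.swap then 1 else 0 := by
  simp [swapMatrix, PEquiv.toMatrix_apply, eq_comm]

theorem swapMatrix_apply_mk_mk [MulZeroOneClass R] (i j k l : n) :
    swapMatrix n R (i, j) (k, l) = (if i = l then 1 else 0) * (if j = k then 1 else 0) := by
  simp only [swapMatrix_apply, Prod.swap_prod_mk, Prod.mk.injEq, ite_zero_mul_ite_zero, mul_one,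
    eq_comm, and_comm]

theorem one_apply_mk_mk [MulZeroOneClass R] (i j k l : n) :
    (1 : Matrix (n × n) (n × n) R) (i, j) (k, l) =
      (if i = k then 1 else 0) * (if j = l then 1 else 0) := by
  rw [← one_kronecker_one, kroneckerMap_apply, one_apply, one_apply]

theorem permMatrix_kronecker_permMatrix [MulZeroOneClass R] (σ τ : Equiv.Perm n) :
    σ.permMatrix R ⊗ₖ τ.permMatrix R = Equiv.Perm.permMatrix R (Equiv.prodCongr σ τ) := by
  ext x y
  simp only [kroneckerMap_apply, PEquiv.toMatrix_apply, Equiv.toPEquiv_apply, Option.mem_some_iff,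
    Equiv.prodCongr_apply, Prod.map, Prod.ext_iff, mul_ite, mul_one, mul_zero, ite_and]
  split_ifs <;> rfl

variable [Fintype n]

theorem swapMatrix_mul [NonAssocSemiring R] {m : Type*} (M : Matrix (n × n) m R) :
    swapMatrix n R * M = M.submatrix Prod.swap id :=
  PEquiv.toMatrix_toPEquiv_mul _ M

theorem mul_swapMatrix [NonAssocSemiring R] {m : Type*} (M : Matrix m (n × n) R) :
    M * swapMatrix n R = M.submatrix id Prod.swap :=
  PEquiv.mul_toMatrix_toPEquiv M _

theorem swapMatrix_mul_self [NonAssocSemiring R] : swapMatrix n R * swapMatrix n R = 1 := by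
  ext x y
  simp [swapMatrix_mul, swapMatrix_apply, Matrix.one_apply, eq_comm]

theorem trace_swapMatrix [NonAssocSemiring R] : (swapMatrix n R).trace = Fintype.card n := by
  simp only [Matrix.trace, diag, swapMatrix_apply, Fintype.sum_prod_type, Prod.swap_prod_mk,
    Prod.mk.injEq, eq_comm, ite_and]
  simp

theorem commute_kronecker_self_swapMatrix [CommSemiring R] (A : Matrix n n R) :
    Commute (A ⊗ₖ A) (swapMatrix n R) := by
  rw [Commute, SemiconjBy, swapMatrix_mul, mul_swapMatrix]
  ext x y
  exact mul_comm _ _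

end Swap

section Commutant

theorem smul_one_add_smul_mem_unitary {A : Type*} [Ring A] [StarRing A] [Algebra ℂ A]
    [StarModule ℂ A] {S : A} (hS : IsSelfAdjoint S) (hSS : S * S = 1) :
    ((1 + Complex.I) / 2) • (1 : A) + ((1 - Complex.I) / 2) • S ∈ unitary A := by
  set V : A := ((1 + Complex.I) / 2) • 1 + ((1 - Complex.I) / 2) • S
  have hstar : star V = ((1 - Complex.I) / 2) • 1 + ((1 + Complex.I) / 2) • S := by
    simp [V, hS.star_eq, sub_eq_add_neg]
  rw [Unitary.mem_iff, hstar]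
  constructor <;>
  · simp only [V, mul_add, add_mul, smul_mul_smul_comm, one_mul, mul_one, hSS]
    match_scalars
    · linear_combination (-1 / 2) * Complex.I_sq
    · linear_combination (1 / 2) * Complex.I_sq

variable {n : Type*} [Fintype n] [DecidableEq n]

/-- The tensor square `U ↦ U ⊗ U` of the defining representation of the unitary group. -/
def kroneckerSq {R : Type*} [CommRing R] [StarRing R] :
    unitaryGroup n R →* unitaryGroup (n × n) R where
  toFun U := ⟨(U : Matrix n n R) ⊗ₖ (U : Matrix n n R), kronecker_mem_unitary U.2 U.2⟩
  map_one' := Subtype.ext one_kronecker_one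
  map_mul' _ _ := Subtype.ext (mul_kronecker_mul _ _ _ _)

theorem permMatrix_mem_unitaryGroup {R : Type*} [CommRing R] [StarRing R] (σ : Equiv.Perm n) :
    σ.permMatrix R ∈ unitaryGroup n R := by
  rw [mem_unitaryGroup_iff, star_eq_conjTranspose, conjTranspose_permMatrix, ← permMatrix_mul,
    inv_mul_cancel, permMatrix_one]

/-- Membership of an operator on `ℂⁿ ⊗ ℂⁿ` in the commutant of all `U ⊗ U` with `U` unitary. -/
def IsUnitaryInvariant (M : Matrix (n × n) (n × n) ℂ) : Prop :=
  ∀ U ∈ unitaryGroup n ℂ, Commute (U ⊗ₖ U) M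

variable {M : Matrix (n × n) (n × n) ℂ}

namespace IsUnitaryInvariant

theorem commute_kronecker_one_add_one_kronecker
    (hM : IsUnitaryInvariant M) {S : Matrix n n ℂ} (hS : IsSelfAdjoint S) (hSS : S * S = 1) :
    Commute (S ⊗ₖ 1 + 1 ⊗ₖ S) M := by
  set V : Matrix n n ℂ := ((1 + Complex.I) / 2) • 1 + ((1 - Complex.I) / 2) • S
  have hV : Commute (V ⊗ₖ V) M := hM V (smul_one_add_smul_mem_unitary hS hSS)
  have hSM : Commute (S ⊗ₖ S) M := hM S (by simp [mem_unitaryGroup_iff, hS.star_eq, hSS])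
  have hsum : S ⊗ₖ 1 + 1 ⊗ₖ S =
      (2 : ℂ) • V ⊗ₖ V - Complex.I • (1 : Matrix (n × n) (n × n) ℂ) + Complex.I • S ⊗ₖ S := by
    simp only [V, add_kronecker, kronecker_add, smul_kronecker, kronecker_smul, one_kronecker_one]
    match_scalars
    · linear_combination (1 / 2) * Complex.I_sq
    · linear_combination (1 / 2) * Complex.I_sq
    · linear_combination (-1 / 2) * Complex.I_sq
    · linear_combination (-1 / 2) * Complex.I_sq
  rw [hsum]
  exact ((hV.smul_left 2).sub_left ((Commute.one_left M).smul_left _)).add_left (hSM.smul_left _)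

theorem sum_mul_apply_add_sum_mul_apply (hM : IsUnitaryInvariant M) {S : Matrix n n ℂ}
    (hS : IsSelfAdjoint S) (hSS : S * S = 1) (i k j l : n) :
    ∑ a, S i a * M (a, k) (j, l) + ∑ a, S k a * M (i, a) (j, l) =
      ∑ a, M (i, k) (a, l) * S a j + ∑ a, M (i, k) (j, a) * S a l := by
  have h := congr($(hM.commute_kronecker_one_add_one_kronecker hS hSS) (i, k) (j, l))
  simpa [add_mul, mul_add, Matrix.mul_apply, Fintype.sum_prod_type, one_apply,
    Finset.sum_add_distrib] using h

theorem apply_eq_zero (hM : IsUnitaryInvariant M) {x y : n × n} (hxy : y ≠ x)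
    (hswap : y ≠ x.swap) : M x y = 0 := by
  obtain ⟨i, k⟩ := x
  obtain ⟨j, l⟩ := y
  let s (a b : n) : ℂ := if b = a then -1 else 1
  have hflip (a : n) : (s a i + s a k) * M (i, k) (j, l) = (s a j + s a l) * M (i, k) (j, l) := by
    have hS : IsSelfAdjoint (diagonal (s a)) := by
      simp [IsSelfAdjoint, star_eq_conjTranspose, s, Pi.star_def, apply_ite star]
    have hSS : diagonal (s a) * diagonal (s a) = 1 := by
      rw [diagonal_mul_diagonal, ← diagonal_one]
      congr 1 with b
      simp only [s]
      split_ifs <;> simp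
    have h := hM.sum_mul_apply_add_sum_mul_apply hS hSS i k j l
    simp only [diagonal_apply, ite_mul, zero_mul, mul_ite, mul_zero, Finset.sum_ite_eq,
      Finset.sum_ite_eq', Finset.mem_univ, if_true] at h
    linear_combination h
  by_contra hne
  have hi := mul_right_cancel₀ hne (hflip i)
  have hk := mul_right_cancel₀ hne (hflip k)
  simp only [s, ne_eq, Prod.mk.injEq, Prod.swap_prod_mk] at hi hk hxy hswap
  split_ifs at hi hk <;> grind

theorem apply_map_perm (hM : IsUnitaryInvariant M) (σ : Equiv.Perm n) (x y : n × n) :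
    M (x.map σ σ) (y.map σ σ) = M x y := by
  have h := hM _ (permMatrix_mem_unitaryGroup σ)
  rw [permMatrix_kronecker_permMatrix, Commute, SemiconjBy, PEquiv.toMatrix_toPEquiv_mul,
    PEquiv.mul_toMatrix_toPEquiv] at h
  simpa [Prod.map_map] using congr($h x (y.map σ σ))

theorem apply_diag (hM : IsUnitaryInvariant M) {p q : n} (hpq : p ≠ q) :
    M (p, p) (p, p) = M (p, q) (p, q) + M (q, p) (p, q) := by
  have hS : IsSelfAdjoint ((Equiv.swap p q).permMatrix ℂ) := by
    simp [IsSelfAdjoint, star_eq_conjTranspose]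
  have hSS : (Equiv.swap p q).permMatrix ℂ * (Equiv.swap p q).permMatrix ℂ = 1 := by
    simp [← permMatrix_mul]
  have h := hM.sum_mul_apply_add_sum_mul_apply hS hSS p p p q
  have hz : M (p, p) (q, q) = 0 := hM.apply_eq_zero (by simp [hpq.symm]) (by simp [hpq.symm])
  simp only [PEquiv.toMatrix_apply, Equiv.toPEquiv_apply, Equiv.swap_apply_left,
    Equiv.swap_apply_right, Equiv.swap_apply_eq_iff, Option.mem_some_iff, ite_mul, one_mul,
    zero_mul, mul_ite, mul_one, mul_zero, Finset.sum_ite_eq, Finset.sum_ite_eq', Finset.mem_univ,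
    if_true, hz, zero_add] at h
  linear_combination -h

theorem exists_eq_smul_one_add_smul_swapMatrix [Nontrivial n] (hM : IsUnitaryInvariant M) :
    ∃ α β : ℂ, M = α • 1 + β • swapMatrix n ℂ := by
  obtain ⟨p, q, hpq⟩ := exists_pair_ne n
  have hperm {i k : n} (hik : i ≠ k) : ∃ σ : Equiv.Perm n, σ p = i ∧ σ q = k :=
    MulAction.is_two_pretransitive_iff.mp (Equiv.Perm.isMultiplyPretransitive n 2) hpq hik
  have hα {i k : n} (hik : i ≠ k) : M (i, k) (i, k) = M (p, q) (p, q) := by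
    obtain ⟨σ, rfl, rfl⟩ := hperm hik
    exact hM.apply_map_perm σ (p, q) (p, q)
  have hβ {i k : n} (hik : i ≠ k) : M (i, k) (k, i) = M (p, q) (q, p) := by
    obtain ⟨σ, rfl, rfl⟩ := hperm hik
    exact hM.apply_map_perm σ (p, q) (q, p)
  refine ⟨M (p, q) (p, q), M (p, q) (q, p), ?_⟩
  ext ⟨i, k⟩ y
  rw [Matrix.add_apply, Matrix.smul_apply, Matrix.smul_apply, one_apply, swapMatrix_apply,
    smul_eq_mul, smul_eq_mul]
  by_cases hik : i = k
  · subst hik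
    by_cases hy : y = (i, i)
    · obtain ⟨m, hm⟩ := exists_ne i
      subst hy
      simp [hM.apply_diag hm.symm, hα hm.symm, hβ hm]
    · simp [hM.apply_eq_zero hy hy, hy, Ne.symm hy]
  by_cases hy : y = (i, k)
  · subst hy
    simp [hα hik, hik]
  by_cases hy' : y = (k, i)
  · subst hy'
    simp [hβ hik, hik]
  · simp [hM.apply_eq_zero hy hy', hy', Ne.symm hy]

theorem eq_smul_one_add_smul_swapMatrix [Nontrivial n] (hM : IsUnitaryInvariant M) :
    M = ((M.trace - (swapMatrix n ℂ * M).trace / Fintype.card n) / (Fintype.card n ^ 2 - 1)) • 1 +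
      (((swapMatrix n ℂ * M).trace - M.trace / Fintype.card n) / (Fintype.card n ^ 2 - 1)) •
        swapMatrix n ℂ := by
  obtain ⟨α, β, rfl⟩ := hM.exists_eq_smul_one_add_smul_swapMatrix
  have hd : (Fintype.card n : ℂ) ≠ 0 := by simp
  have hd' : (Fintype.card n : ℂ) ^ 2 - 1 ≠ 0 := by
    have : 1 < Fintype.card n ^ 2 := Nat.one_lt_pow two_ne_zero Fintype.one_lt_card
    exact sub_ne_zero.mpr (by exact_mod_cast this.ne')
  simp only [mul_add, mul_smul_comm, mul_one, swapMatrix_mul_self, trace_add, trace_smul, trace_one,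
    trace_swapMatrix, Fintype.card_prod, Nat.cast_mul, smul_eq_mul]
  congr 2 <;> field_simp <;> ring

end IsUnitaryInvariant

end Commutant

section Haar

variable {n : Type*} [Fintype n] [DecidableEq n]

theorem continuous_kroneckerSq : Continuous fun U : unitaryGroup n ℂ ↦
    (kroneckerSq U : Matrix (n × n) (n × n) ℂ) :=
  continuous_matrix fun x y ↦
    (continuous_subtype_val.matrix_elem x.1 y.1).mul (continuous_subtype_val.matrix_elem x.2 y.2)

theorem mul_single_one_mul_star_apply {R : Type*} [Semiring R] [StarRing R] (A : Matrix n n R)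
    (x y x' y' : n) :
    (A * single x' y' 1 * star A : Matrix n n R) x y = A x x' * star (A y y') := by
  rw [Matrix.mul_assoc, Matrix.mul_apply, Finset.sum_eq_single x']
  all_goals simp +contextual [single_mul_apply_of_ne, star_apply]

variable [MeasurableSpace (unitaryGroup n ℂ)] [BorelSpace (unitaryGroup n ℂ)]
  {μ : Measure (unitaryGroup n ℂ)}

theorem aestronglyMeasurable_kroneckerSq : AEStronglyMeasurable (fun U : unitaryGroup n ℂ ↦
    (kroneckerSq U : Matrix (n × n) (n × n) ℂ)) μ :=
  continuous_kroneckerSq.aestronglyMeasurable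

theorem trace_mul_twirl_kroneckerSq [IsProbabilityMeasure μ] {C : Matrix (n × n) (n × n) ℂ}
    (hC : ∀ U : unitaryGroup n ℂ, Commute (kroneckerSq U).1 C)
    (X : Matrix (n × n) (n × n) ℂ) :
    (C * twirl μ kroneckerSq X).trace = (C * X).trace := by
  let φ := (traceLinearMap (n × n) ℝ ℂ).toContinuousLinearMap
  exact map_mul_twirl (μ := μ) aestronglyMeasurable_kroneckerSq φ trace_mul_comm hC X

theorem twirl_kroneckerSq [Nontrivial n] [μ.IsMulLeftInvariant] [IsProbabilityMeasure μ]
    (X : Matrix (n × n) (n × n) ℂ) :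
    twirl μ kroneckerSq X =
      ((X.trace - (swapMatrix n ℂ * X).trace / Fintype.card n) / (Fintype.card n ^ 2 - 1)) • 1 +
      (((swapMatrix n ℂ * X).trace - X.trace / Fintype.card n) / (Fintype.card n ^ 2 - 1)) •
        swapMatrix n ℂ := by
  have htrace : (twirl μ kroneckerSq X).trace = X.trace := by
    simpa using trace_mul_twirl_kroneckerSq (μ := μ) (fun _ ↦ .one_right _) X
  have hswap : (swapMatrix n ℂ * twirl μ kroneckerSq X).trace = (swapMatrix n ℂ * X).trace :=
    trace_mul_twirl_kroneckerSq (fun _ ↦ commute_kronecker_self_swapMatrix _) X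
  have hinv : IsUnitaryInvariant (twirl μ kroneckerSq X) := fun U hU ↦
    commute_twirl (μ := μ) aestronglyMeasurable_kroneckerSq X ⟨U, hU⟩
  rw [hinv.eq_smul_one_add_smul_swapMatrix, htrace, hswap]

theorem twirl_kroneckerSq_single_apply [IsFiniteMeasure μ] (x y x' y' : n × n) :
    twirl μ kroneckerSq (single x' y' 1) x y =
      ∫ U : unitaryGroup n ℂ,
        U.1 x.1 x'.1 * U.1 x.2 x'.2 * star (U.1 y.1 y'.1 * U.1 y.2 y'.2) ∂μ := by
  let φ := (entryLinearMap ℝ ℂ x y).toContinuousLinearMap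
  calc twirl μ kroneckerSq (single x' y' 1) x y
      = ∫ U, φ ((kroneckerSq U).1 * single x' y' 1 * star (kroneckerSq U).1) ∂μ :=
        map_twirl (μ := μ) aestronglyMeasurable_kroneckerSq φ _
    _ = _ := integral_congr_ae (.of_forall fun U ↦ mul_single_one_mul_star_apply _ x y x' y')

end Haar

end Weingarten

open Weingarten Matrix.Norms.L2Operator in
theorem weingarten_second_moment_general {n : Type*} [Fintype n] [DecidableEq n] [Nontrivial n]
    [MeasurableSpace (unitaryGroup n ℂ)] [BorelSpace (unitaryGroup n ℂ)]
    (μ : Measure (unitaryGroup n ℂ)) [μ.IsMulLeftInvariant] [IsProbabilityMeasure μ]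
    (i j k l i' j' k' l' : n) :
    ∫ U : unitaryGroup n ℂ, (U : Matrix n n ℂ) i i' * (starRingEnd ℂ) ((U : Matrix n n ℂ) j j') *
        (U : Matrix n n ℂ) k k' * (starRingEnd ℂ) ((U : Matrix n n ℂ) l l') ∂μ =
      ((if i = j then 1 else 0) * (if k = l then 1 else 0) *
          (if i' = j' then 1 else 0) * (if k' = l' then 1 else 0) +
        (if i = l then 1 else 0) * (if k = j then 1 else 0) *
          (if i' = l' then 1 else 0) * (if k' = j' then 1 else 0)) /
        ((Fintype.card n : ℂ) ^ 2 - 1) -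
      ((if i = j then 1 else 0) * (if k = l then 1 else 0) *
          (if i' = l' then 1 else 0) * (if k' = j' then 1 else 0) +
        (if i = l then 1 else 0) * (if k = j then 1 else 0) *
          (if i' = j' then 1 else 0) * (if k' = l' then 1 else 0)) /
        ((Fintype.card n : ℂ) * ((Fintype.card n : ℂ) ^ 2 - 1)) := by
  let X : Matrix (n × n) (n × n) ℂ := single (i', k') (j', l') 1
  have hX : X.trace = (if i' = j' then 1 else 0) * (if k' = l' then 1 else 0) := by
    rw [← one_mul X, trace_mul_single, one_apply_mk_mk, op_smul_eq_mul, mul_one]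
    simp only [eq_comm]
  have hswapX : (swapMatrix n ℂ * X).trace =
      (if i' = l' then 1 else 0) * (if k' = j' then 1 else 0) := by
    rw [trace_mul_single, swapMatrix_apply_mk_mk, op_smul_eq_mul, mul_one, mul_comm]
    simp only [eq_comm]
  calc ∫ U : unitaryGroup n ℂ, _ ∂μ
      = twirl μ kroneckerSq X (i, k) (j, l) := by
        rw [twirl_kroneckerSq_single_apply]
        refine integral_congr_ae (.of_forall fun U ↦ ?_)
        simp only [star_mul, starRingEnd_apply]
        ring
    _ = _ := by
        rw [twirl_kroneckerSq, Matrix.add_apply, Matrix.smul_apply, Matrix.smul_apply, hX,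
          hswapX, one_apply_mk_mk, swapMatrix_apply_mk_mk]
        simp only [smul_eq_mul, div_eq_mul_inv, mul_inv]
        ring

/-- Entrywise second-moment Weingarten formula: for Haar-random `U` in the unitary
group `U(d)`, `∫ U_{ii'} conj(U_{jj'}) U_{kk'} conj(U_{ll'}) dμ` is given by the
second-order Weingarten expression. -/
theorem weingarten_second_moment (d : ℕ) (hd : 2 ≤ d)
    (μ : Measure (Matrix.unitaryGroup (Fin d) ℂ))
    [μ.IsHaarMeasure] [IsProbabilityMeasure μ]
    (i j k l i' j' k' l' : Fin d) :
    (∫ U : Matrix.unitaryGroup (Fin d) ℂ,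
        (U : Matrix (Fin d) (Fin d) ℂ) i i' *
          (starRingEnd ℂ) ((U : Matrix (Fin d) (Fin d) ℂ) j j') *
          (U : Matrix (Fin d) (Fin d) ℂ) k k' *
          (starRingEnd ℂ) ((U : Matrix (Fin d) (Fin d) ℂ) l l') ∂μ)
    = ((if i = j then (1:ℂ) else 0) * (if k = l then (1:ℂ) else 0) *
          (if i' = j' then (1:ℂ) else 0) * (if k' = l' then (1:ℂ) else 0) +
        (if i = l then (1:ℂ) else 0) * (if k = j then (1:ℂ) else 0) *
          (if i' = l' then (1:ℂ) else 0) * (if k' = j' then (1:ℂ) else 0)) /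
        ((d : ℂ) ^ 2 - 1)
      - ((if i = j then (1:ℂ) else 0) * (if k = l then (1:ℂ) else 0) *
            (if i' = l' then (1:ℂ) else 0) * (if k' = j' then (1:ℂ) else 0) +
          (if i = l then (1:ℂ) else 0) * (if k = j then (1:ℂ) else 0) *
            (if i' = j' then (1:ℂ) else 0) * (if k' = l' then (1:ℂ) else 0)) /
        ((d : ℂ) * ((d : ℂ) ^ 2 - 1)) := by
  have : Nontrivial (Fin d) := Fin.nontrivial_iff_two_le.mpr hd
  simpa using weingarten_second_moment_general μ i j k l i' j' k' l'
end

section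
/- Let k ≤ k' be natural numbers and let H_n denote the probabilists' Hermite polynomial of degree n. Then for every α : ℝ, ∫ ℝ exp(-x²/2) · H_k(x) · H_{k'}(x) · exp(i α x) dx = √(2π) · exp(-α²/2) · Σ_{l=0}^{k} (k! · k'! · (i α)^{k'-k+2l}) / (l! · (k-l)! · (k'-k+l)!), as an equality of complex numbers. -/
open scoped Nat

/-!
Put `L p = ∫ p(x) e^{-x²/2 + ax} dx` and `D = d/dX`. Integration by parts gives
`L ((X - D) p) = a L p`, and `H_{n+1} = (X - D) H_n`; hence `L H_n = aⁿ L 1` and, moving one raising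
operator at a time across the product, `L (H_n p) = L ((a + D)ⁿ p)`. For `p = H_m` the binomial
theorem and `Dʲ H_m = m (m-1) ⋯ (m-j+1) H_{m-j}` give the sum, times the Gaussian integral `L 1`.
-/

open Polynomial MeasureTheory

section Hermite

lemma derivative_hermite_succ (n : ℕ) :
    derivative (hermite (n + 1)) = ((n + 1 : ℕ) : ℤ[X]) * hermite n := by
  induction n with
  | zero => simp
  | succ n ih =>
    rw [hermite_succ (n + 1), derivative_sub, derivative_mul, ih, derivative_natCast_mul,
      derivative_X, hermite_succ n]
    push_cast
    ring

/-- For `n < j` both sides vanish, so the truncated subtraction does no harm. -/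
lemma iterate_derivative_hermite (n j : ℕ) :
    derivative^[j] (hermite n) = (n.descFactorial j : ℤ[X]) * hermite (n - j) := by
  induction j generalizing n with
  | zero => simp
  | succ j ih =>
    cases n with
    | zero => simp
    | succ n =>
      rw [Function.iterate_succ_apply, derivative_hermite_succ, iterate_derivative_natCast_mul, ih,
        Nat.succ_descFactorial_succ, Nat.add_sub_add_right, Nat.cast_mul, mul_assoc]

end Hermite

section RaisingOperator

variable {R M : Type*} [CommRing R] [AddCommGroup M] [Module R M]

/-- The linear map `L` turns the raising operator `p ↦ X p - p'` of the Hermite polynomials into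
multiplication by the scalar `a`. This is what integration by parts gives for
`L p = ∫ p(x) e^{-x²/2 + ax} dx`. -/
def IntertwinesRaising (L : R[X] →ₗ[R] M) (a : R) : Prop :=
  ∀ p : R[X], L (X * p - derivative p) = a • L p

namespace IntertwinesRaising

variable {L : R[X] →ₗ[R] M} {a : R}

lemma map_hermite (hL : IntertwinesRaising L a) (n : ℕ) :
    L ((hermite n).map (Int.castRingHom R)) = a ^ n • L 1 := by
  induction n with
  | zero => simp
  | succ n ih =>
    rw [hermite_succ, Polynomial.map_sub, Polynomial.map_mul, map_X, ← derivative_map, hL, ih,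
      pow_succ', mul_smul]

lemma map_hermite_mul (hL : IntertwinesRaising L a) (n : ℕ) (p : R[X]) :
    L ((hermite n).map (Int.castRingHom R) * p) =
      L (((algebraMap R (Module.End R R[X]) a + derivative : Module.End R R[X]) ^ n) p) := by
  induction n generalizing p with
  | zero => simp
  | succ n ih =>
    set h := (hermite n).map (Int.castRingHom R)
    have product_rule : (hermite (n + 1)).map (Int.castRingHom R) * p =
        (X * (h * p) - derivative (h * p)) + h * derivative p := by
      rw [hermite_succ, Polynomial.map_sub, Polynomial.map_mul, map_X, ← derivative_map,
        derivative_mul]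
      ring
    rw [product_rule, map_add, hL, ← map_smul, ← map_add, ← mul_smul_comm, ← mul_add, ih, pow_succ,
      Module.End.mul_apply, LinearMap.add_apply, Module.algebraMap_end_apply]

lemma map_hermite_mul_eq_sum (hL : IntertwinesRaising L a) (n : ℕ) (p : R[X]) :
    L ((hermite n).map (Int.castRingHom R) * p) =
      ∑ l ∈ Finset.range (n + 1), (a ^ l * n.choose l) • L (derivative^[n - l] p) := by
  have commute : Commute (algebraMap R (Module.End R R[X]) a) derivative :=
    Algebra.commutes a derivative
  rw [hL.map_hermite_mul, commute.add_pow, LinearMap.sum_apply, map_sum]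
  refine Finset.sum_congr rfl fun l _ => ?_
  rw [← map_pow, ← map_natCast (algebraMap R (Module.End R R[X])), ← Algebra.commutes]
  simp only [Module.End.mul_apply, Module.algebraMap_end_apply, Module.End.pow_apply, map_smul,
    mul_smul]

/-- Where `n - (m - l)` is truncated, the descending factorial vanishes. -/
lemma map_hermite_mul_hermite (hL : IntertwinesRaising L a) (m n : ℕ) :
    L ((hermite m).map (Int.castRingHom R) * (hermite n).map (Int.castRingHom R)) =
      (∑ l ∈ Finset.range (m + 1),
        m.choose l * n.descFactorial (m - l) * a ^ (l + (n - (m - l)))) • L 1 := by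
  rw [hL.map_hermite_mul_eq_sum, Finset.sum_smul]
  refine Finset.sum_congr rfl fun l _ => ?_
  rw [iterate_derivative_map, iterate_derivative_hermite, Polynomial.map_mul,
    Polynomial.map_natCast, ← C_eq_natCast, ← smul_eq_C_mul, map_smul, hL.map_hermite, smul_smul,
    smul_smul, pow_add]
  ring_nf

end IntertwinesRaising

end RaisingOperator

section GaussianFunctional

lemma abs_pow_le_factorial_mul_exp_add_exp_neg (x : ℝ) (n : ℕ) :
    |x| ^ n ≤ n ! * (Real.exp x + Real.exp (-x)) := by
  calc |x| ^ n ≤ n ! * Real.exp |x| :=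
        (div_le_iff₀' (by positivity)).mp (Real.pow_div_factorial_le_exp _ (abs_nonneg x) n)
    _ ≤ n ! * (Real.exp x + Real.exp (-x)) := by gcongr; exact Real.exp_abs_le x

lemma integrable_cexp_mul_sq_add_mul {b : ℂ} (hb : b.re < 0) (c : ℂ) :
    Integrable fun x : ℝ => Complex.exp (b * x ^ 2 + c * x) := by
  simpa only [add_zero] using integrable_cexp_quadratic' hb c 0

lemma integrable_pow_mul_cexp_mul_sq_add_mul {b : ℂ} (hb : b.re < 0) (c : ℂ) (n : ℕ) :
    Integrable fun x : ℝ => (x : ℂ) ^ n * Complex.exp (b * x ^ 2 + c * x) := by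
  -- The power is absorbed by moving `c` to `c ± 1`, as `|x|ⁿ ≤ n! (eˣ + e⁻ˣ)`.
  have dominating : Integrable fun x : ℝ =>
      n ! * (‖Complex.exp (b * x ^ 2 + (c + 1) * x)‖ +
        ‖Complex.exp (b * x ^ 2 + (c - 1) * x)‖) :=
    ((integrable_cexp_mul_sq_add_mul hb (c + 1)).norm.add
      (integrable_cexp_mul_sq_add_mul hb (c - 1)).norm).const_mul _
  refine dominating.mono' (by fun_prop) (.of_forall fun x => ?_)
  have shift_add : Complex.exp (b * x ^ 2 + (c + 1) * x) =
      Complex.exp (b * x ^ 2 + c * x) * Real.exp x := by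
    rw [Complex.ofReal_exp, ← Complex.exp_add]; ring_nf
  have shift_sub : Complex.exp (b * x ^ 2 + (c - 1) * x) =
      Complex.exp (b * x ^ 2 + c * x) * Real.exp (-x) := by
    rw [Complex.ofReal_exp, ← Complex.exp_add]; push_cast; ring_nf
  rw [shift_add, shift_sub, norm_mul, norm_mul, norm_mul, norm_pow, Complex.norm_real,
    Complex.norm_real, Complex.norm_real, Real.norm_eq_abs, Real.norm_of_nonneg (Real.exp_nonneg _),
    Real.norm_of_nonneg (Real.exp_nonneg _), ← mul_add, mul_left_comm, mul_comm]
  gcongr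
  exact abs_pow_le_factorial_mul_exp_add_exp_neg x n

lemma integrable_eval_mul_cexp_mul_sq_add_mul {b : ℂ} (hb : b.re < 0) (c : ℂ) (p : ℂ[X]) :
    Integrable fun x : ℝ => p.eval (x : ℂ) * Complex.exp (b * x ^ 2 + c * x) := by
  simp only [eval_eq_sum_range, Finset.sum_mul, mul_assoc]
  exact integrable_finsetSum _ fun n _ =>
    (integrable_pow_mul_cexp_mul_sq_add_mul hb c n).const_mul _

lemma hasDerivAt_eval_mul_cexp_mul_sq_add_mul (b c : ℂ) (p : ℂ[X]) (x : ℝ) :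
    HasDerivAt (fun x : ℝ => p.eval (x : ℂ) * Complex.exp (b * x ^ 2 + c * x))
      ((derivative p + (C (2 * b) * X + C c) * p).eval (x : ℂ) *
        Complex.exp (b * x ^ 2 + c * x)) x := by
  have exponent : HasDerivAt (fun z : ℂ => b * z ^ 2 + c * z) (b * (2 * x) + c) x := by
    simpa using ((hasDerivAt_pow 2 (x : ℂ)).const_mul b).fun_add
      ((hasDerivAt_id (x : ℂ)).const_mul c)
  refine ((p.hasDerivAt (x : ℂ)).mul exponent.cexp).comp_ofReal.congr_deriv ?_
  simp only [eval_add, eval_mul, eval_C, eval_X]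
  ring

lemma integral_derivative_add_mul_cexp_mul_sq_add_mul {b : ℂ} (hb : b.re < 0) (c : ℂ)
    (p : ℂ[X]) :
    ∫ x : ℝ, (derivative p + (C (2 * b) * X + C c) * p).eval (x : ℂ) *
      Complex.exp (b * x ^ 2 + c * x) = 0 :=
  integral_eq_zero_of_hasDerivAt_of_integrable (hasDerivAt_eval_mul_cexp_mul_sq_add_mul b c p)
    (integrable_eval_mul_cexp_mul_sq_add_mul hb c _)
    (integrable_eval_mul_cexp_mul_sq_add_mul hb c p)

/-- The functional `p ↦ ∫ p(x) e^{-x²/2 + ax} dx` on complex polynomials. The exponent is written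
with leading coefficient `-1 / 2` in order to be an instance of `b x² + c x`. -/
noncomputable def gaussianFunctional (a : ℂ) : ℂ[X] →ₗ[ℂ] ℂ where
  toFun p := ∫ x : ℝ, p.eval (x : ℂ) * Complex.exp (-1 / 2 * x ^ 2 + a * x)
  map_add' p q := by
    simp only [eval_add, add_mul]
    exact integral_add (integrable_eval_mul_cexp_mul_sq_add_mul (by norm_num) a p)
      (integrable_eval_mul_cexp_mul_sq_add_mul (by norm_num) a q)
  map_smul' r p := by
    simp only [eval_smul, smul_eq_mul, mul_assoc, integral_const_mul, RingHom.id_apply]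

lemma gaussianFunctional_apply (a : ℂ) (p : ℂ[X]) :
    gaussianFunctional a p =
      ∫ x : ℝ, p.eval (x : ℂ) * Complex.exp (-1 / 2 * x ^ 2 + a * x) :=
  rfl

lemma intertwinesRaising_gaussianFunctional (a : ℂ) :
    IntertwinesRaising (gaussianFunctional a) a := by
  intro p
  have total_derivative : gaussianFunctional a (derivative p + (C (2 * (-1 / 2)) * X + C a) * p) =
      0 := integral_derivative_add_mul_cexp_mul_sq_add_mul (by norm_num) a p
  have rearrange : derivative p + (C (2 * (-1 / 2)) * X + C a) * p =
      a • p - (X * p - derivative p) := by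
    rw [smul_eq_C_mul, show (2 * (-1 / 2) : ℂ) = -1 by norm_num, C_neg, C_1]
    ring
  rw [rearrange, map_sub, map_smul, sub_eq_zero] at total_derivative
  exact total_derivative.symm

lemma gaussianFunctional_one (a : ℂ) :
    gaussianFunctional a 1 = (Real.sqrt (2 * Real.pi) : ℂ) * Complex.exp (a ^ 2 / 2) := by
  have sqrt_eq_cpow : ((Real.pi : ℂ) / -(-1 / 2)) ^ (1 / 2 : ℂ) = Real.sqrt (2 * Real.pi) := by
    rw [Real.sqrt_eq_rpow, Complex.ofReal_cpow (by positivity)]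
    push_cast
    ring_nf
  have integral_eq := integral_cexp_quadratic (b := -1 / 2) (by norm_num) a 0
  rw [sqrt_eq_cpow] at integral_eq
  simp only [gaussianFunctional_apply, eval_one, one_mul]
  convert integral_eq using 3
  · rw [add_zero]
  · ring

lemma eval_ofReal_map_intCast (p : ℤ[X]) (x : ℝ) :
    (p.map (Int.castRingHom ℂ)).eval (x : ℂ) = (aeval x p : ℝ) := by
  rw [← algebraMap_int_eq, eval_map_algebraMap]
  exact aeval_algebraMap_apply ℂ x p

lemma integral_exp_mul_aeval_mul_aeval_mul_cexp (p q : ℤ[X]) (a : ℂ) :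
    ∫ x : ℝ, (Real.exp (-x ^ 2 / 2) : ℂ) * (aeval x p : ℝ) * (aeval x q : ℝ) *
        Complex.exp (a * x) =
      gaussianFunctional a (p.map (Int.castRingHom ℂ) * q.map (Int.castRingHom ℂ)) := by
  rw [gaussianFunctional_apply]
  congr 1 with x
  have split_exp : Complex.exp (-1 / 2 * x ^ 2 + a * x) =
      Real.exp (-x ^ 2 / 2) * Complex.exp (a * x) := by
    rw [Complex.exp_add]; push_cast; ring_nf
  rw [split_exp, eval_mul, eval_ofReal_map_intCast, eval_ofReal_map_intCast]
  ring

end GaussianFunctional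

lemma choose_mul_descFactorial_eq_div (K : Type*) [Field K] [CharZero K] {k k' l : ℕ}
    (hl : l ≤ k) (hk : k ≤ k') :
    (k.choose l * k'.descFactorial (k - l) : K) =
      k ! * k' ! / (l ! * (k - l)! * (k' - k + l)!) := by
  have factorial_eq : (k' - k + l)! * k'.descFactorial (k - l) = k' ! := by
    rw [show k' - k + l = k' - (k - l) by lia]
    exact Nat.factorial_mul_descFactorial (by lia)
  have factorial_ne_zero (n : ℕ) : (n ! : K) ≠ 0 := Nat.cast_ne_zero.mpr n.factorial_ne_zero
  rw [Nat.cast_choose K hl, ← factorial_eq, Nat.cast_mul]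
  field_simp [factorial_ne_zero]

theorem hermite_oscillatory_integral_general (k k' : ℕ) (hkk' : k ≤ k') (α : ℂ) :
    (∫ x : ℝ, (Real.exp (-x ^ 2 / 2) : ℂ) *
        ((Polynomial.aeval x (Polynomial.hermite k) : ℝ) : ℂ) *
        ((Polynomial.aeval x (Polynomial.hermite k') : ℝ) : ℂ) *
        Complex.exp (Complex.I * α * (x : ℂ)))
    = (Real.sqrt (2 * Real.pi) : ℂ) * Complex.exp (-α ^ 2 / 2) *
        ∑ l ∈ Finset.range (k + 1),
          (k ! : ℂ) * (k' ! : ℂ) * (Complex.I * α) ^ (k' - k + 2 * l) /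
            ((l ! : ℂ) * ((k - l)! : ℂ) * ((k' - k + l)! : ℂ)) := by
  rw [integral_exp_mul_aeval_mul_aeval_mul_cexp,
    (intertwinesRaising_gaussianFunctional _).map_hermite_mul_hermite, gaussianFunctional_one,
    smul_eq_mul, mul_comm, mul_pow, Complex.I_sq, neg_one_mul]
  congr 1
  refine Finset.sum_congr rfl fun l hl => ?_
  have hl : l ≤ k := Finset.mem_range_succ_iff.mp hl
  have exponent_eq : l + (k' - (k - l)) = k' - k + 2 * l := by lia
  rw [choose_mul_descFactorial_eq_div ℂ hl hkk', exponent_eq, div_mul_eq_mul_div]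

/-- Gaussian–Hermite integral with an oscillatory factor: for `k ≤ k'`,
`∫ e^{-x²/2} H_k(x) H_{k'}(x) e^{iαx} dx
  = √(2π) e^{-α²/2} Σ_{l=0}^{k} k! k'! (iα)^{k'-k+2l} / (l! (k-l)! (k'-k+l)!)`. -/
theorem hermite_oscillatory_integral (k k' : ℕ) (hkk' : k ≤ k') (α : ℝ) :
    (∫ x : ℝ, (Real.exp (-x ^ 2 / 2) : ℂ) *
        ((Polynomial.aeval x (Polynomial.hermite k) : ℝ) : ℂ) *
        ((Polynomial.aeval x (Polynomial.hermite k') : ℝ) : ℂ) *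
        Complex.exp (Complex.I * (α : ℂ) * (x : ℂ)))
    = (Real.sqrt (2 * Real.pi) : ℂ) * Complex.exp (-(α : ℂ) ^ 2 / 2) *
        ∑ l ∈ Finset.range (k + 1),
          (k ! : ℂ) * (k' ! : ℂ) * (Complex.I * (α : ℂ)) ^ (k' - k + 2 * l) /
            ((l ! : ℂ) * ((k - l)! : ℂ) * ((k' - k + l)! : ℂ)) :=
  hermite_oscillatory_integral_general k k' hkk' α
end

section
/- Let k be a natural number, let H_k denote the probabilists' Hermite polynomial of degree k, and let f : ℝ → ℂ be a Schwartz function. Then ∫ ℝ exp(-x²/2) · H_k(x) · f(x) dx = ∫ ℝ exp(-x²/2) · f^{(k)}(x) dx, where f^{(k)} denotes the k-th iterated derivative of f. -/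
/-!
Since `H_{k+1} = X H_k - H_k'`, the function `e^{-x²/2} H_{k+1}(x)` is minus the derivative of
`e^{-x²/2} H_k(x)`. Each integration by parts therefore lowers the Hermite index by one and
differentiates `f` once; there are no boundary terms, because a function on `ℝ` that is integrable
together with its derivative tends to zero at `±∞`.
-/

open MeasureTheory Polynomial
open scoped SchwartzMap

lemma hasDerivAt_exp_neg_sq_div_two_mul_aeval {R : Type*} [CommRing R] [Algebra R ℝ] (p : R[X])
    (x : ℝ) :
    HasDerivAt (fun y : ℝ ↦ Real.exp (-y ^ 2 / 2) * aeval y p)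
      (-(Real.exp (-x ^ 2 / 2) * aeval x (X * p - derivative p))) x := by
  have hexponent : HasDerivAt (fun y : ℝ ↦ -y ^ 2 / 2) (-x) x :=
    ((hasDerivAt_pow 2 x).fun_neg.div_const 2).congr_deriv (by simp; ring)
  refine (hexponent.exp.mul (p.hasDerivAt_aeval x)).congr_deriv ?_
  simp only [map_sub, map_mul, aeval_X]
  ring

lemma hasDerivAt_exp_neg_sq_div_two_mul_hermite (k : ℕ) (x : ℝ) :
    HasDerivAt (fun y : ℝ ↦ Real.exp (-y ^ 2 / 2) * aeval y (hermite k))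
      (-(Real.exp (-x ^ 2 / 2) * aeval x (hermite (k + 1)))) x :=
  hermite_succ k ▸ hasDerivAt_exp_neg_sq_div_two_mul_aeval (hermite k) x

section IntegrationByParts

variable {F : Type*} [NormedAddCommGroup F] [NormedSpace ℝ F]

lemma integral_exp_neg_sq_div_two_mul_hermite_succ_smul {k : ℕ} {f f' : ℝ → F}
    (hf : ∀ x, HasDerivAt f (f' x) x)
    (h_int : Integrable fun x ↦ (Real.exp (-x ^ 2 / 2) * aeval x (hermite k)) • f x)
    (h_int_succ : Integrable fun x ↦ (Real.exp (-x ^ 2 / 2) * aeval x (hermite (k + 1))) • f x)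
    (h_int_deriv : Integrable fun x ↦ (Real.exp (-x ^ 2 / 2) * aeval x (hermite k)) • f' x) :
    ∫ x, (Real.exp (-x ^ 2 / 2) * aeval x (hermite (k + 1))) • f x =
      ∫ x, (Real.exp (-x ^ 2 / 2) * aeval x (hermite k)) • f' x := by
  have h_parts := integral_bilinear_hasDerivAt_right_eq_neg_left_of_integrable
    (L := ContinuousLinearMap.lsmul ℝ ℝ)
    (fun x _ ↦ hasDerivAt_exp_neg_sq_div_two_mul_hermite k x) (fun x _ ↦ hf x)
    h_int_deriv (by simpa using h_int_succ.neg) h_int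
  simpa [integral_neg] using h_parts.symm

theorem hermite_integration_by_parts_general {k : ℕ} {f : ℝ → F}
    (hf : ∀ j < k, Differentiable ℝ (iteratedDeriv j f))
    (h_int : ∀ i j, i + j ≤ k →
      Integrable fun x ↦ (Real.exp (-x ^ 2 / 2) * aeval x (hermite i)) • iteratedDeriv j f x) :
    ∫ x, (Real.exp (-x ^ 2 / 2) * aeval x (hermite k)) • f x =
      ∫ x, Real.exp (-x ^ 2 / 2) • iteratedDeriv k f x := by
  induction k generalizing f with
  | zero => simp
  | succ k ih =>
    have hf_deriv (x : ℝ) : HasDerivAt f (deriv f x) x := by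
      simpa using (hf 0 k.succ_pos x).hasDerivAt
    rw [integral_exp_neg_sq_div_two_mul_hermite_succ_smul hf_deriv
      (by simpa using h_int k 0 (by lia)) (by simpa using h_int (k + 1) 0 le_rfl)
      (by simpa using h_int k 1 le_rfl), iteratedDeriv_succ']
    refine ih (fun j hj ↦ ?_) (fun i j hij ↦ ?_)
    · simpa only [iteratedDeriv_succ'] using hf (j + 1) (by lia)
    · simpa only [iteratedDeriv_succ'] using h_int i (j + 1) (by lia)

end IntegrationByParts

section Schwartz

variable {R F : Type*} [CommSemiring R] [NormedAddCommGroup F] [NormedSpace ℝ F]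

lemma hasTemperateGrowth_aeval {A : Type*} [NormedRing A] [NormedAlgebra ℝ A] [Algebra R A]
    (p : R[X]) : (fun x : A ↦ aeval x p).HasTemperateGrowth := by
  simp only [aeval_eq_sum_range, Algebra.smul_def]
  fun_prop

variable [Algebra R ℝ]

lemma integrable_exp_neg_sq_div_two_mul_aeval_smul (p : R[X]) (f : 𝓢(ℝ, F)) {μ : Measure ℝ}
    [μ.HasTemperateGrowth] :
    Integrable (fun x ↦ (Real.exp (-x ^ 2 / 2) * aeval x p) • f x) μ := by
  have h_poly : Integrable (fun x ↦ aeval x p • f x) μ := by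
    simpa only [SchwartzMap.smulLeftCLM_apply (hasTemperateGrowth_aeval p)] using
      (SchwartzMap.smulLeftCLM F (fun x : ℝ ↦ aeval x p) f).integrable
  have h_exp_le (x : ℝ) : ‖Real.exp (-x ^ 2 / 2)‖ ≤ 1 := by
    rw [Real.norm_of_nonneg (Real.exp_nonneg _), Real.exp_le_one_iff]
    linarith [sq_nonneg x]
  simpa only [mul_smul] using!
    h_poly.bdd_smul 1 (by fun_prop) (Filter.Eventually.of_forall h_exp_le)

lemma coe_iterate_derivCLM (𝕜 : Type*) [RCLike 𝕜] [NormedSpace 𝕜 F] (n : ℕ) (f : 𝓢(ℝ, F)) :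
    ⇑((SchwartzMap.derivCLM 𝕜 F)^[n] f) = iteratedDeriv n f := by
  induction n generalizing f with
  | zero => simp
  | succ n ih => exact (ih _).trans iteratedDeriv_succ'.symm

lemma integrable_exp_neg_sq_div_two_mul_aeval_smul_iteratedDeriv (p : R[X]) (f : 𝓢(ℝ, F)) (n : ℕ)
    {μ : Measure ℝ} [μ.HasTemperateGrowth] :
    Integrable (fun x ↦ (Real.exp (-x ^ 2 / 2) * aeval x p) • iteratedDeriv n f x) μ := by
  simpa only [coe_iterate_derivCLM] using
    integrable_exp_neg_sq_div_two_mul_aeval_smul p ((SchwartzMap.derivCLM ℝ F)^[n] f) (μ := μ)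

end Schwartz

/-- Repeated integration by parts for Hermite polynomials against a Schwartz function:
`∫ e^{-x²/2} H_k(x) f(x) dx = ∫ e^{-x²/2} f^{(k)}(x) dx`. -/
theorem hermite_integration_by_parts (k : ℕ) (f : SchwartzMap ℝ ℂ) :
    (∫ x : ℝ, (Real.exp (-x ^ 2 / 2) : ℂ) *
        ((Polynomial.aeval x (Polynomial.hermite k) : ℝ) : ℂ) * f x)
    = ∫ x : ℝ, (Real.exp (-x ^ 2 / 2) : ℂ) * iteratedDeriv k (⇑f) x := by
  simpa only [Complex.real_smul, Complex.ofReal_mul] using hermite_integration_by_parts_general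
    (fun j _ ↦ (f.smooth ⊤).differentiable_iteratedDeriv j (mod_cast WithTop.coe_lt_top _))
    (fun i j _ ↦ integrable_exp_neg_sq_div_two_mul_aeval_smul_iteratedDeriv (hermite i) f j)
end

section
/- Let Z = ∫_{ℝ⁴} ∏_{i=1}^{4} exp(-λᵢ²/2) · ∏_{1 ≤ i < j ≤ 4} (λᵢ - λⱼ)² dλ > 0 be the normalization of the GUE(4) joint eigenvalue density. Then for every α : ℝ, (1/Z) ∫_{ℝ⁴} ∏_{i=1}^{4} exp(-λᵢ²/2) · ∏_{1 ≤ i < j ≤ 4} (λᵢ - λⱼ)² · exp(i α (λ₁ - λ₂)) dλ = (1/36) · exp(-α²) · (-α¹⁰ + (25/2) α⁸ - 64 α⁶ + 138 α⁴ - 144 α² + 36), as an equality of complex numbers. -/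
/-!
The squared Vandermonde factor is the square of the determinant of the Hermite polynomials
`He_a(λ_k)`, so Andréief's identity turns the Gaussian integral of `∏ (λᵢ - λⱼ)² e^{∑ z_k λ_k}` into
the mixed discriminant of the matrices of one-dimensional integrals of
`He_a(x) He_b(x) e^{-x²/2 + zx}`, one matrix for each frequency `z = z_k`. Integration by parts
computes these integrals recursively. At frequency zero the Hermite polynomials are orthogonal and
the matrix is diagonal, with entries proportional to `a!`; when only the first two variables carry a
frequency, the mixed discriminant therefore collapses to a sum of `2 × 2` minors
`(P_aa Q_bb - P_ab Q_ba) / (a! b!)` over pairs of indices. For four variables and opposite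
frequencies `±z` this is an explicit polynomial in `z`, which yields the form factor at `z = iα` and
the normalization at `z = 0`.
-/

open Complex Finset MeasureTheory Polynomial Equiv ProbabilityTheory

open scoped Nat

section MixedDiscriminant

variable {ι R : Type*} [Fintype ι] [DecidableEq ι] [CommRing R]

/-- The mixed discriminant of a family of square matrices, normalized without the prefactor
`1 / (card ι)!`, so that equal matrices `A` give `(card ι)! * det A`. -/
def mixedDiscriminant (A : ι → Matrix ι ι R) : R :=
  ∑ σ : Perm ι, ∑ τ : Perm ι, (σ.sign : R) * τ.sign * ∏ k, A k (σ k) (τ k)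

lemma mixedDiscriminant_smul (c : ι → R) (A : ι → Matrix ι ι R) :
    mixedDiscriminant (fun k ↦ c k • A k) = (∏ k, c k) * mixedDiscriminant A := by
  simp only [mixedDiscriminant, Matrix.smul_apply, smul_eq_mul, prod_mul_distrib, mul_sum,
    mul_left_comm]

lemma mixedDiscriminant_eq_sum_det (A : ι → Matrix ι ι R) :
    mixedDiscriminant A = ∑ σ : Perm ι, (Matrix.of fun k j ↦ A k (σ k) (σ j)).det := by
  refine sum_congr rfl fun σ _ ↦ ?_
  rw [← Fintype.sum_equiv (Equiv.mulLeft σ) _ _ fun _ ↦ rfl, ← Matrix.det_transpose,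
    Matrix.det_apply']
  refine sum_congr rfl fun ρ _ ↦ ?_
  have hsign : (σ.sign : R) * (σ * ρ).sign = ρ.sign := by
    rw [← Int.cast_mul, ← Units.val_mul, Perm.sign_mul, ← mul_assoc, Int.units_mul_self, one_mul]
  simp only [Equiv.coe_mulLeft, hsign, Perm.mul_apply, Matrix.transpose_apply, Matrix.of_apply]

lemma sum_perm_apply_zero_apply_one {M : Type*} [AddCommMonoid M] {n : ℕ}
    (f : Fin (n + 2) → Fin (n + 2) → M) (hf : ∀ a, f a a = 0) :
    ∑ σ : Perm (Fin (n + 2)), f (σ 0) (σ 1) = n ! • ∑ a, ∑ b, f a b := by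
  have hcompl (a : Fin (n + 2)) : ∑ b : Fin (n + 1), f a (swap 0 a b.succ) = ∑ b, f a b := by
    rw [← Equiv.sum_comp (swap 0 a), Fin.sum_univ_succ (n := n + 1), swap_apply_left, hf, zero_add]
  have hfst (g : Fin (n + 1) → M) : ∑ σ : Perm (Fin (n + 1)), g (σ 0) = n ! • ∑ b, g b := by
    rw [← Perm.decomposeFin.symm.sum_comp, Fintype.sum_prod_type]
    simp [Fintype.card_perm, sum_nsmul]
  rw [← Perm.decomposeFin.symm.sum_comp, Fintype.sum_prod_type, ← sum_nsmul]
  refine sum_congr rfl fun a _ ↦ ?_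
  simp only [Perm.decomposeFin_symm_apply_zero, Perm.decomposeFin_symm_apply_one]
  rw [hfst fun b ↦ f a (swap 0 a b.succ), hcompl]

lemma det_eq_of_rows_diagonal {n : ℕ} (M : Matrix (Fin (n + 2)) (Fin (n + 2)) R)
    (hM : ∀ (k : Fin n) (l), l ≠ k.succ.succ → M k.succ.succ l = 0) :
    M.det = (M 0 0 * M 1 1 - M 0 1 * M 1 0) * ∏ k : Fin n, M k.succ.succ k.succ.succ := by
  let e : Fin 2 ⊕ Fin n ≃ Fin (n + 2) := finSumFinEquiv.trans (finCongr (add_comm 2 n))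
  have he (k : Fin n) : e (Sum.inr k) = k.succ.succ := by
    ext; simp [e]
  have hne (k : Fin n) (j : Fin 2) : e (Sum.inl j) ≠ k.succ.succ := by
    simp only [ne_eq, Fin.ext_iff, e, Equiv.trans_apply, finSumFinEquiv_apply_left,
      finCongr_apply, Fin.val_cast, Fin.val_castAdd, Fin.val_succ]
    omega
  have h₂₁ : (M.submatrix e e).toBlocks₂₁ = 0 := by
    ext k j
    simpa [Matrix.toBlocks₂₁, he] using hM k _ (hne k j)
  have h₂₂ : (M.submatrix e e).toBlocks₂₂ = Matrix.diagonal fun k ↦ M k.succ.succ k.succ.succ := by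
    ext k l
    rcases eq_or_ne k l with rfl | hkl
    · simp [Matrix.toBlocks₂₂, he]
    · simpa [Matrix.toBlocks₂₂, he, hkl] using hM k l.succ.succ (by simpa using hkl.symm)
  rw [← Matrix.det_submatrix_equiv_self e, ← Matrix.fromBlocks_toBlocks (M.submatrix e e), h₂₁, h₂₂,
    Matrix.det_fromBlocks_zero₂₁, Matrix.det_diagonal, Matrix.det_fin_two]
  rfl

lemma mixedDiscriminant_of_diagonal {K : Type*} [Field K] {n : ℕ}
    (A : Fin (n + 2) → Matrix (Fin (n + 2)) (Fin (n + 2)) K) (h : Fin (n + 2) → K)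
    (hh : ∀ a, h a ≠ 0) (hA : ∀ k : Fin n, A k.succ.succ = Matrix.diagonal h) :
    mixedDiscriminant A = n ! * (∏ a, h a) *
      ∑ a, ∑ b, (A 0 a a * A 1 b b - A 0 a b * A 1 b a) / (h a * h b) := by
  have hdet (σ : Perm (Fin (n + 2))) : (Matrix.of fun k j ↦ A k (σ k) (σ j)).det =
      (∏ a, h a) * ((A 0 (σ 0) (σ 0) * A 1 (σ 1) (σ 1) - A 0 (σ 0) (σ 1) * A 1 (σ 1) (σ 0)) /
        (h (σ 0) * h (σ 1))) := by
    have hprod : ∏ a, h a = h (σ 0) * h (σ 1) * ∏ k : Fin n, h (σ k.succ.succ) := by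
      rw [← Equiv.prod_comp σ, Fin.prod_univ_succ, Fin.prod_univ_succ, Fin.succ_zero_eq_one,
        mul_assoc]
    rw [det_eq_of_rows_diagonal _ fun k l hl ↦ by simp [hA, hl.symm], hprod]
    simp only [Matrix.of_apply, hA, Matrix.diagonal_apply_eq]
    field_simp [hh (σ 0), hh (σ 1)]
  rw [mixedDiscriminant_eq_sum_det, sum_congr rfl fun σ _ ↦ hdet σ, ← mul_sum,
    sum_perm_apply_zero_apply_one
      (fun a b ↦ (A 0 a a * A 1 b b - A 0 a b * A 1 b a) / (h a * h b)) fun a ↦ by simp,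
    nsmul_eq_mul]
  ring

end MixedDiscriminant

section Andreief

variable {ι 𝕜 : Type*} [Fintype ι] [DecidableEq ι] [RCLike 𝕜] {X : ι → Type*}
  [∀ k, MeasurableSpace (X k)]

/-- Andréief's identity. -/
theorem integral_det_mul_det (μ : ∀ k, Measure (X k)) [∀ k, SigmaFinite (μ k)]
    {f g : ι → ∀ k, X k → 𝕜} (hfg : ∀ a b k, Integrable (fun x ↦ f a k x * g b k x) (μ k)) :
    ∫ x, (Matrix.of fun a k ↦ f a k (x k)).det * (Matrix.of fun b k ↦ g b k (x k)).det
        ∂Measure.pi μ =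
      mixedDiscriminant fun k ↦ Matrix.of fun a b ↦ ∫ x, f a k x * g b k x ∂μ k := by
  have hexpand (x : ∀ k, X k) :
      (Matrix.of fun a k ↦ f a k (x k)).det * (Matrix.of fun b k ↦ g b k (x k)).det =
        ∑ σ : Perm ι, ∑ τ : Perm ι,
          (σ.sign : 𝕜) * τ.sign * ∏ k, (f (σ k) k (x k) * g (τ k) k (x k)) := by
    simp only [Matrix.det_apply', sum_mul_sum, Matrix.of_apply, prod_mul_distrib]
    exact sum_congr rfl fun σ _ ↦ sum_congr rfl fun τ _ ↦ by ring
  have hint (σ τ : Perm ι) : Integrable (fun x : ∀ k, X k ↦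
      (σ.sign : 𝕜) * τ.sign * ∏ k, (f (σ k) k (x k) * g (τ k) k (x k))) (Measure.pi μ) :=
    (Integrable.fintype_prod_dep fun k ↦ hfg (σ k) (τ k) k).const_mul _
  simp_rw [hexpand]
  rw [integral_finsetSum _ fun σ _ ↦ integrable_finsetSum _ fun τ _ ↦ hint σ τ]
  refine sum_congr rfl fun σ _ ↦ ?_
  rw [integral_finsetSum _ fun τ _ ↦ hint σ τ]
  refine sum_congr rfl fun τ _ ↦ ?_
  rw [integral_const_mul]
  congr 1
  exact integral_fintype_prod_eq_prod fun k x ↦ f (σ k) k x * g (τ k) k x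

end Andreief

lemma prod_sub_sq_eq_det_sq {R : Type*} [CommRing R] {n : ℕ} (v : Fin n → R) (p : Fin n → R[X])
    (hdeg : ∀ a, (p a).natDegree = a) (hmonic : ∀ a, (p a).Monic) :
    ∏ i, ∏ j ∈ Ioi i, (v i - v j) ^ 2 = (Matrix.of fun a k ↦ (p a).eval (v k)).det ^ 2 := by
  have hdet : (Matrix.of fun a k ↦ (p a).eval (v k)).det = ∏ i, ∏ j ∈ Ioi i, (v j - v i) := by
    rw [← Matrix.det_transpose, ← Matrix.det_vandermonde,
      Matrix.det_eval_matrixOfPolynomials_eq_det_vandermonde v p hdeg hmonic]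
    rfl
  simp only [hdet, ← prod_pow, sub_sq_comm]

section Hermite

lemma derivative_hermite (n : ℕ) : derivative (hermite n) = (n : ℤ[X]) * hermite (n - 1) := by
  induction n with
  | zero => simp
  | succ n ih =>
    have hrec : (n : ℤ[X]) * hermite n =
        (n : ℤ[X]) * (X * hermite (n - 1) - derivative (hermite (n - 1))) := by
      cases n <;> simp [hermite_succ]
    rw [hermite_succ, derivative_sub, derivative_mul, derivative_X, ih, derivative_mul,
      derivative_natCast, Nat.add_sub_cancel]
    push_cast
    linear_combination -hrec

/-- Up to the factor `√(2π) e^{z²/2}`, the integral of `He_a(x) He_b(x) e^{-x²/2 + zx}`, presented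
through the recursion which integration by parts gives. The truncated `b - 1` at `b = 0` is
harmless, as its coefficient vanishes. -/
def hermiteOverlap {R : Type*} [CommSemiring R] (z : R) : ℕ → ℕ → R
  | 0, b => z ^ b
  | a + 1, b => z * hermiteOverlap z a b + b * hermiteOverlap z a (b - 1)

lemma hermiteOverlap_zero {R : Type*} [CommSemiring R] (a b : ℕ) :
    hermiteOverlap (0 : R) a b = if a = b then (a ! : R) else 0 := by
  induction a generalizing b with
  | zero => cases b <;> simp [hermiteOverlap]
  | succ a ih =>
    cases b with
    | zero => simp [hermiteOverlap]
    | succ b =>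
      rcases eq_or_ne a b with rfl | hab
      · simp [hermiteOverlap, ih, Nat.factorial_succ]
      · simp [hermiteOverlap, ih, hab]

/-- The Gaussian weight `e^{-x²/2}` times the exponential `e^{zx}`, a plane wave if `z` is
imaginary. -/
noncomputable def gaussianExp (z : ℂ) (x : ℝ) : ℂ := cexp (-(x : ℂ) ^ 2 / 2 + z * x)

lemma gaussianExp_eq_smul (z : ℂ) (x : ℝ) :
    gaussianExp z x = √(2 * Real.pi) • gaussianPDFReal 0 1 x • cexp (z * x) := by
  have hsqrt : √(2 * Real.pi) ≠ 0 := by positivity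
  have hpdf : √(2 * Real.pi) * gaussianPDFReal 0 1 x = Real.exp (-x ^ 2 / 2) := by
    simp only [gaussianPDFReal, NNReal.coe_one, mul_one, sub_zero, mul_inv_cancel_left₀ hsqrt]
  rw [smul_smul, hpdf, real_smul, gaussianExp, Complex.exp_add]
  push_cast
  rfl

lemma integral_gaussianExp (z : ℂ) :
    ∫ x, gaussianExp z x = √(2 * Real.pi) * cexp (z ^ 2 / 2) := by
  have hmgf : ∫ x : ℝ, cexp (z * x) ∂gaussianReal 0 1 = cexp (z ^ 2 / 2) := by
    simpa [complexMGF] using complexMGF_id_gaussianReal (μ := 0) (v := 1) z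
  rw [integral_gaussianReal_eq_integral_smul one_ne_zero] at hmgf
  simp only [gaussianExp_eq_smul]
  rw [integral_smul, hmgf, real_smul]

lemma hasDerivAt_gaussianExp (z : ℂ) (x : ℝ) :
    HasDerivAt (gaussianExp z) ((z - x) * gaussianExp z x) x := by
  have hexponent : HasDerivAt (fun y : ℂ ↦ -y ^ 2 / 2 + z * y) (z - x) (x : ℂ) :=
    (((hasDerivAt_id (x : ℂ)).pow 2).neg.div_const 2 |>.add
      ((hasDerivAt_id (x : ℂ)).const_mul z)).congr_deriv (by simp; ring)
  exact (hexponent.cexp.congr_deriv (mul_comm _ _)).comp_ofReal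

lemma integrable_pow_mul_gaussianExp (z : ℂ) (n : ℕ) :
    Integrable fun x : ℝ ↦ (x : ℂ) ^ n * gaussianExp z x := by
  have h : Integrable (fun x : ℝ ↦ (x : ℂ) ^ n * cexp (z * x)) (gaussianReal 0 1) :=
    integrable_pow_mul_cexp_of_re_mem_interior_integrableExpSet (X := id) (by simp) n
  rw [gaussianReal_of_var_ne_zero _ one_ne_zero, integrable_withDensity_iff_integrable_smul'
    (measurable_gaussianPDF _ _) (.of_forall fun _ ↦ gaussianPDF_lt_top)] at h
  simpa only [gaussianExp_eq_smul, mul_smul_comm, toReal_gaussianPDF]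
    using h.fun_smul √(2 * Real.pi)

variable {R : Type*} [CommRing R] [Algebra R ℂ]

lemma integrable_aeval_mul_gaussianExp (p : R[X]) (z : ℂ) :
    Integrable fun x : ℝ ↦ aeval (x : ℂ) p * gaussianExp z x := by
  simp only [aeval_eq_sum_range, Algebra.smul_def, sum_mul, mul_assoc]
  exact integrable_finsetSum _ fun k _ ↦ (integrable_pow_mul_gaussianExp z k).const_mul _

lemma integral_aeval_X_mul_sub_derivative_mul_gaussianExp (p : R[X]) (z : ℂ) :
    ∫ x : ℝ, aeval (x : ℂ) (X * p - derivative p) * gaussianExp z x =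
      z * ∫ x : ℝ, aeval (x : ℂ) p * gaussianExp z x := by
  have hint := (integrable_aeval_mul_gaussianExp p z).const_mul z
  have hint' := integrable_aeval_mul_gaussianExp (X * p - derivative p) z
  have hderiv (x : ℝ) : HasDerivAt (fun y : ℝ ↦ aeval (y : ℂ) p * gaussianExp z y)
      (z * (aeval (x : ℂ) p * gaussianExp z x) -
        aeval (x : ℂ) (X * p - derivative p) * gaussianExp z x) x :=
    ((p.hasDerivAt_aeval (x : ℂ)).comp_ofReal.mul (hasDerivAt_gaussianExp z x)).congr_deriv
      (by simp only [map_sub, map_mul, aeval_X]; ring)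
  have hzero := integral_eq_zero_of_hasDerivAt_of_integrable hderiv (hint.sub hint')
    (integrable_aeval_mul_gaussianExp p z)
  rw [integral_sub hint hint', integral_const_mul] at hzero
  exact (sub_eq_zero.mp hzero).symm

theorem integral_hermite_mul_hermite_mul_gaussianExp (a b : ℕ) (z : ℂ) :
    ∫ x : ℝ, aeval (x : ℂ) (hermite a * hermite b) * gaussianExp z x =
      √(2 * Real.pi) * cexp (z ^ 2 / 2) * hermiteOverlap z a b := by
  induction a generalizing b with
  | zero =>
    induction b with
    | zero => simp [integral_gaussianExp, hermiteOverlap]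
    | succ b ih =>
      simp only [hermite_zero, map_one, one_mul, hermiteOverlap] at ih ⊢
      rw [hermite_succ, integral_aeval_X_mul_sub_derivative_mul_gaussianExp, ih]
      ring
  | succ a ih =>
    have hsplit : hermite (a + 1) * hermite b =
        (X * (hermite a * hermite b) - derivative (hermite a * hermite b)) +
          (b : ℤ[X]) * (hermite a * hermite (b - 1)) := by
      rw [hermite_succ, derivative_mul, derivative_hermite b]
      ring
    simp only [hsplit, map_add, map_mul (aeval _) (b : ℤ[X]), map_natCast, add_mul,
      mul_assoc (b : ℂ)]
    rw [integral_add (integrable_aeval_mul_gaussianExp _ z)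
        ((integrable_aeval_mul_gaussianExp _ z).const_mul _), integral_const_mul,
      integral_aeval_X_mul_sub_derivative_mul_gaussianExp, ih, ih, hermiteOverlap]
    ring

end Hermite

theorem integral_prod_gaussianExp_mul_prod_sub_sq {n : ℕ} (z : Fin n → ℂ) :
    ∫ l : Fin n → ℝ, (∏ k, gaussianExp (z k) (l k)) * ∏ i, ∏ j ∈ Ioi i, ((l i : ℂ) - l j) ^ 2 =
      (∏ k, √(2 * Real.pi) * cexp (z k ^ 2 / 2)) *
        mixedDiscriminant fun k ↦ Matrix.of fun a b : Fin n ↦ hermiteOverlap (z k) a b := by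
  have hintegrand (l : Fin n → ℝ) :
      (∏ k, gaussianExp (z k) (l k)) * ∏ i, ∏ j ∈ Ioi i, ((l i : ℂ) - l j) ^ 2 =
        (Matrix.of fun a k : Fin n ↦ gaussianExp (z k) (l k) * aeval (l k : ℂ) (hermite a)).det *
          (Matrix.of fun b k : Fin n ↦ aeval (l k : ℂ) (hermite b)).det := by
    rw [prod_sub_sq_eq_det_sq _ (fun a : Fin n ↦ (hermite a).map (algebraMap ℤ ℂ))
        (fun a ↦ by simp [(hermite_monic a).natDegree_map]) fun a ↦ (hermite_monic a).map _,
      sq, ← mul_assoc, ← Matrix.det_mul_row]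
    simp only [eval_map_algebraMap, Matrix.of_apply]
  have hoverlap (a b : ℕ) (w : ℂ) (x : ℝ) :
      gaussianExp w x * aeval (x : ℂ) (hermite a) * aeval (x : ℂ) (hermite b) =
        aeval (x : ℂ) (hermite a * hermite b) * gaussianExp w x := by
    rw [map_mul]; ring
  simp only [hintegrand]
  rw [volume_pi, integral_det_mul_det (fun _ : Fin n ↦ (volume : Measure ℝ))
      (f := fun a k x ↦ gaussianExp (z k) x * aeval (x : ℂ) (hermite a))
      (g := fun b _ x ↦ aeval (x : ℂ) (hermite b)), ← mixedDiscriminant_smul]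
  · congr with k a b
    simp only [hoverlap, Matrix.of_apply, Matrix.smul_apply, smul_eq_mul]
    rw [integral_hermite_mul_hermite_mul_gaussianExp]
  · intro a b k
    simp only [hoverlap]
    exact integrable_aeval_mul_gaussianExp _ _

/-- The joint eigenvalue density of the `n × n` Gaussian Unitary Ensemble, up to normalization. -/
noncomputable def gueDensity {n : ℕ} (l : Fin n → ℝ) : ℝ :=
  (∏ i, Real.exp (-(l i) ^ 2 / 2)) * ∏ i, ∏ j ∈ Ioi i, (l i - l j) ^ 2

theorem integral_gueDensity_mul_cexp (n : ℕ) (u v : ℂ) :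
    ∫ l : Fin (n + 2) → ℝ, (gueDensity l : ℂ) * cexp (u * l 0 + v * l 1) =
      √(2 * Real.pi) ^ (n + 2) * cexp ((u ^ 2 + v ^ 2) / 2) *
        (n ! * (∏ k : Fin (n + 2), ((k : ℕ)! : ℂ)) * ∑ a : Fin (n + 2), ∑ b : Fin (n + 2),
          (hermiteOverlap u a a * hermiteOverlap v b b -
            hermiteOverlap u a b * hermiteOverlap v b a) / ((a : ℕ)! * (b : ℕ)!)) := by
  let z : Fin (n + 2) → ℂ := Fin.cons u (Fin.cons v 0)
  have hintegrand (l : Fin (n + 2) → ℝ) : (gueDensity l : ℂ) * cexp (u * l 0 + v * l 1) =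
      (∏ k, gaussianExp (z k) (l k)) * ∏ i, ∏ j ∈ Ioi i, ((l i : ℂ) - l j) ^ 2 := by
    have hwave : cexp (u * l 0 + v * l 1) = ∏ k, cexp (z k * l k) := by
      simp [z, Fin.prod_univ_succ, Complex.exp_add]
    simp only [gueDensity, gaussianExp, Complex.exp_add, prod_mul_distrib, hwave]
    push_cast
    ring
  have hconst : ∏ k, (√(2 * Real.pi) : ℂ) * cexp (z k ^ 2 / 2) =
      √(2 * Real.pi) ^ (n + 2) * cexp ((u ^ 2 + v ^ 2) / 2) := by
    simp only [z, Fin.prod_univ_succ (n := n + 1), Fin.prod_univ_succ (n := n), Fin.cons_zero,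
      Fin.cons_succ, Pi.zero_apply, zero_pow two_ne_zero, zero_div, Complex.exp_zero, mul_one,
      prod_const, card_univ, Fintype.card_fin, add_div, Complex.exp_add]
    ring
  have hdiag (k : Fin n) :
      (Matrix.of fun a b : Fin (n + 2) ↦ hermiteOverlap (z k.succ.succ) a b) =
        Matrix.diagonal fun a : Fin (n + 2) ↦ ((a : ℕ)! : ℂ) := by
    ext a b
    simp [z, hermiteOverlap_zero, Matrix.diagonal_apply, Fin.ext_iff]
  simp_rw [hintegrand]
  rw [integral_prod_gaussianExp_mul_prod_sub_sq, hconst,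
    mixedDiscriminant_of_diagonal _ (fun a : Fin (n + 2) ↦ ((a : ℕ)! : ℂ))
      (fun a ↦ Nat.cast_ne_zero.mpr (Nat.factorial_ne_zero _)) hdiag]
  simp [z]

lemma sum_hermiteOverlap_four (z : ℂ) :
    ∑ a : Fin 4, ∑ b : Fin 4, (hermiteOverlap z a a * hermiteOverlap (-z) b b -
        hermiteOverlap z a b * hermiteOverlap (-z) b a) / ((a : ℕ)! * (b : ℕ)!) =
      1 / 3 * (z ^ 10 + 25 / 2 * z ^ 8 + 64 * z ^ 6 + 138 * z ^ 4 + 144 * z ^ 2 + 36) := by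
  simp only [Fin.sum_univ_four, hermiteOverlap, Nat.factorial, Fin.isValue, Fin.coe_ofNat_eq_mod,
    Nat.reduceMod, Nat.zero_mod, Nat.reduceSub]
  push_cast
  ring

theorem integral_gueDensity_four_mul_cexp (z : ℂ) :
    ∫ l : Fin 4 → ℝ, (gueDensity l : ℂ) * cexp (z * (l 0 - l 1)) =
      8 * (2 * Real.pi) ^ 2 * cexp (z ^ 2) *
        (z ^ 10 + 25 / 2 * z ^ 8 + 64 * z ^ 6 + 138 * z ^ 4 + 144 * z ^ 2 + 36) := by
  have hsqrt : (√(2 * Real.pi) : ℂ) ^ 4 = (2 * Real.pi) ^ 2 := by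
    rw [show 4 = 2 * 2 from rfl, pow_mul, ← ofReal_pow, Real.sq_sqrt (by positivity)]
    push_cast
    rfl
  have hfactorial : ∏ k : Fin 4, ((k : ℕ)! : ℂ) = 12 := by
    norm_num [Fin.prod_univ_four, Nat.factorial]
  have hwave (l : Fin 4 → ℝ) : z * (l 0 - l 1) = z * l 0 + -z * l 1 := by ring
  simp only [hwave]
  refine (integral_gueDensity_mul_cexp 2 z (-z)).trans ?_
  rw [sum_hermiteOverlap_four, hsqrt, hfactorial, neg_sq, add_self_div_two]
  push_cast [Nat.factorial]
  ring

lemma integral_gueDensity_four : ∫ l : Fin 4 → ℝ, gueDensity l = 288 * (2 * Real.pi) ^ 2 := by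
  have h := integral_gueDensity_four_mul_cexp 0
  simp only [zero_mul, Complex.exp_zero, mul_one, integral_complex_ofReal] at h
  apply ofReal_injective
  rw [h, sq (0 : ℂ), zero_mul, Complex.exp_zero]
  push_cast
  ring

theorem gue4_form_factor_general (α : ℂ) :
    let w : (Fin 4 → ℝ) → ℝ := fun l =>
      (∏ i : Fin 4, Real.exp (-(l i) ^ 2 / 2)) *
        ∏ i : Fin 4, ∏ j ∈ Finset.Ioi i, (l i - l j) ^ 2
    let Z : ℝ := ∫ l : Fin 4 → ℝ, w l
    0 < Z ∧
      (1 / (Z : ℂ)) *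
          (∫ l : Fin 4 → ℝ, (w l : ℂ) * cexp (I * α * ((l 0 : ℂ) - (l 1 : ℂ))))
        = (1 / 36) * cexp (-α ^ 2) *
            (-α ^ 10 + (25 / 2) * α ^ 8 - 64 * α ^ 6 + 138 * α ^ 4 - 144 * α ^ 2 + 36) := by
  intro w Z
  have hZ : Z = 288 * (2 * Real.pi) ^ 2 := integral_gueDensity_four
  have hα : (I * α) ^ 2 = -α ^ 2 := by rw [mul_pow, I_sq, neg_one_mul]
  have hint : ∫ l : Fin 4 → ℝ, (w l : ℂ) * cexp (I * α * (l 0 - l 1)) = _ :=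
    integral_gueDensity_four_mul_cexp (I * α)
  have hpi : (Real.pi : ℂ) ≠ 0 := ofReal_ne_zero.mpr Real.pi_ne_zero
  refine ⟨by rw [hZ]; positivity, ?_⟩
  rw [hint, hZ, pow_mul (I * α) 2 5, pow_mul (I * α) 2 4, pow_mul (I * α) 2 3,
    pow_mul (I * α) 2 2, hα]
  push_cast
  field_simp
  ring

/-- The GUE(4) spectral-form-factor-type average: with the (unnormalized) GUE(4) joint
eigenvalue density `∏ e^{-λᵢ²/2} ∏_{i<j} (λᵢ-λⱼ)²` of normalization `Z > 0`,
`(1/Z) ∫ e^{iα(λ₁-λ₂)} = (1/36) e^{-α²}(-α¹⁰ + (25/2)α⁸ - 64α⁶ + 138α⁴ - 144α² + 36)`. -/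
theorem gue4_form_factor (α : ℝ) :
    let w : (Fin 4 → ℝ) → ℝ := fun l =>
      (∏ i : Fin 4, Real.exp (-(l i) ^ 2 / 2)) *
        ∏ i : Fin 4, ∏ j ∈ Finset.Ioi i, (l i - l j) ^ 2
    let Z : ℝ := ∫ l : Fin 4 → ℝ, w l
    0 < Z ∧
      (1 / (Z : ℂ)) *
          (∫ l : Fin 4 → ℝ, (w l : ℂ) * Complex.exp (Complex.I * (α : ℂ) * ((l 0 : ℂ) - (l 1 : ℂ))))
        = (1 / 36) * Complex.exp (-(α : ℂ) ^ 2) *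
            (-(α : ℂ) ^ 10 + (25 / 2) * (α : ℂ) ^ 8 - 64 * (α : ℂ) ^ 6 + 138 * (α : ℂ) ^ 4 -
              144 * (α : ℂ) ^ 2 + 36) :=
  gue4_form_factor_general α
end

section
/- Let L be a positive natural number and let σ be a permutation of Fin L. Then there exist permutations τ₁ and τ₂ of Fin L with τ₁² = 1 and τ₂² = 1 (involutions) such that σ = τ₂ * τ₁ and (card of support of τ₁) + (card of support of τ₂) = 2 (L - c), where c is the number of orbits of the cyclic group generated by σ acting on Fin L (the number of cycles of σ, counting fixed points as 1-cycles). -/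
/-!
On a cycle of length `n`, identified with `ZMod n`, the rotation `k ↦ k + 1` is the reflection
`k ↦ -1 - k` followed by the reflection `k ↦ -k`. Their fixed points are the solutions of
`2 k + j = 0` for `j = 1` and `j = 0`. As `k` and `j` vary, `2 k + j` runs through `2 n` consecutive
integers, exactly two of which are multiples of `n`; so the two reflections together move `2 n - 2`
points, whatever the parity of `n`. Reflecting all `c` cycles at once moves `2 (L - c)` points.
-/

section

open Equiv Finset Function MulAction Subgroup

section Reflections

theorem sum_card_filter_mul_add_eq (n d : ℕ) [NeZero n] (a : ZMod n) :
    ∑ j : Fin d, #{k : ZMod n | (d : ZMod n) * k + (j : ℕ) = a} = d := by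
  have hn : 0 < n := NeZero.pos n
  let digits : ZMod n × Fin d ≃ Fin (n * d) :=
    ((ZMod.finEquiv n).symm.toEquiv.prodCongr (Equiv.refl _)).trans finProdFinEquiv
  have val_finEquiv_symm (k : ZMod n) : ((ZMod.finEquiv n).symm k).val = k.val := by
    cases n with
    | zero => exact absurd hn (lt_irrefl 0)
    | succ => rfl
  have cast_digits (k : ZMod n) (j : Fin d) :
      ((digits (k, j) : ℕ) : ZMod n) = d * k + (j : ℕ) := by
    simp [digits, val_finEquiv_symm, add_comm]
  calc ∑ j : Fin d, #{k : ZMod n | (d : ZMod n) * k + (j : ℕ) = a}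
      = #{m : Fin (n * d) | ((m : ℕ) : ZMod n) = a} := by
        simp only [card_filter, ← digits.sum_comp, Fintype.sum_prod_type_right, cast_digits]
    _ = (n * d).count (· ≡ a.val [MOD n]) := by
        simp only [← ZMod.natCast_eq_natCast_iff, ZMod.natCast_zmod_val,
          Nat.count_eq_card_filter_range, card_filter,
          Fin.sum_univ_eq_sum_range fun m => if (m : ZMod n) = a then 1 else 0]
    _ = d := by
        rw [Nat.count_modEq_card _ hn, Nat.mul_mod_right, Nat.mul_div_cancel_left _ hn,
          if_neg (Nat.not_lt_zero _), add_zero]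

/-- The reflection `x ↦ a - x` of an abelian group. For `ZMod n` these are the reflections of the
dihedral group acting on the vertices of an `n`-gon. -/
def dihedralReflection {A : Type*} [AddCommGroup A] (a : A) : Perm A :=
  Equiv.subLeft a

theorem dihedralReflection_mul {A : Type*} [AddCommGroup A] (a b : A) :
    dihedralReflection a * dihedralReflection b = Equiv.addRight (a - b) := by
  ext x
  simp only [dihedralReflection, Perm.mul_apply, Equiv.subLeft_apply, Equiv.coe_addRight]
  abel

theorem dihedralReflection_mul_self {A : Type*} [AddCommGroup A] (a : A) :
    dihedralReflection a * dihedralReflection a = 1 := by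
  rw [dihedralReflection_mul, sub_self, Equiv.addRight_zero]

theorem card_support_add_card_fixed {α : Type*} [Fintype α] [DecidableEq α] (τ : Perm α) :
    #τ.support + #{x | τ x = x} = Fintype.card α := by
  rw [add_comm]
  exact card_filter_add_card_filter_not _

theorem dihedralReflection_neg_apply_eq_self_iff {R : Type*} [Ring R] (j k : R) :
    dihedralReflection (-j) k = k ↔ 2 * k + j = 0 := by
  rw [dihedralReflection, Equiv.subLeft_apply, sub_eq_iff_eq_add, ← two_mul, eq_comm,
    eq_neg_iff_add_eq_zero]

theorem card_support_dihedralReflection_neg_one_add_zero (n : ℕ) [NeZero n] :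
    #(dihedralReflection (-1 : ZMod n)).support + #(dihedralReflection (0 : ZMod n)).support + 2 =
      2 * n := by
  have card_fixed :
      #{k : ZMod n | dihedralReflection 0 k = k} + #{k : ZMod n | dihedralReflection (-1) k = k} =
        2 := by
    simpa only [Fin.sum_univ_two, Fin.val_zero, Fin.val_one, Nat.cast_zero, Nat.cast_one,
      Nat.cast_ofNat, ← dihedralReflection_neg_apply_eq_self_iff, neg_zero]
      using sum_card_filter_mul_add_eq n 2 0
  have card_zero := card_support_add_card_fixed (dihedralReflection (0 : ZMod n))
  have card_neg_one := card_support_add_card_fixed (dihedralReflection (-1 : ZMod n))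
  rw [ZMod.card] at card_zero card_neg_one
  omega

end Reflections

section SigmaCoordinates

variable {α ι : Type*} {β : ι → Type*}

/-- The permutation of `α` that acts on each part `β i` of a decomposition `e` of `α` by a given
permutation of that part. It is bundled as a homomorphism so that identities between permutations
can be checked part by part. -/
def permOfSigma (e : α ≃ Σ i, β i) : (∀ i, Perm (β i)) →* Perm α :=
  e.symm.permCongrHom.toMonoidHom.comp (Perm.sigmaCongrRightHom β)

theorem permOfSigma_apply_symm (e : α ≃ Σ i, β i) (F : ∀ i, Perm (β i)) (i : ι) (b : β i) :
    permOfSigma e F (e.symm ⟨i, b⟩) = e.symm ⟨i, F i b⟩ := by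
  simp [permOfSigma]

theorem card_support_permOfSigma [Fintype α] [DecidableEq α] [Fintype ι]
    [∀ i, Fintype (β i)] [∀ i, DecidableEq (β i)] (e : α ≃ Σ i, β i) (F : ∀ i, Perm (β i)) :
    #(permOfSigma e F).support = ∑ i, #(F i).support := by
  have support_eq : (permOfSigma e F).support =
      (univ.sigma fun i => (F i).support).map e.symm.toEmbedding := by
    ext x
    obtain ⟨⟨i, b⟩, rfl⟩ := e.symm.surjective x
    simp [permOfSigma_apply_symm]
  rw [support_eq, card_map, card_sigma]

theorem permOfSigma_dihedralReflection_mul [∀ i, AddCommGroup (β i)] (e : α ≃ Σ i, β i)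
    (a b : ∀ i, β i) :
    permOfSigma e (fun i => dihedralReflection (a i)) *
        permOfSigma e (fun i => dihedralReflection (b i)) =
      permOfSigma e fun i => Equiv.addRight (a i - b i) := by
  rw [← map_mul]
  exact congrArg _ (funext fun i => dihedralReflection_mul (a i) (b i))

theorem permOfSigma_dihedralReflection_mul_self [∀ i, AddCommGroup (β i)] (e : α ≃ Σ i, β i)
    (a : ∀ i, β i) :
    permOfSigma e (fun i => dihedralReflection (a i)) *
        permOfSigma e (fun i => dihedralReflection (a i)) = 1 := by
  rw [← map_mul, ← map_one (permOfSigma e)]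
  exact congrArg _ (funext fun i => dihedralReflection_mul_self (a i))

theorem card_support_permOfSigma_dihedralReflection [Fintype α] [DecidableEq α] [Fintype ι]
    {n : ι → ℕ} [∀ i, NeZero (n i)] (e : α ≃ Σ i, ZMod (n i)) :
    #(permOfSigma e fun _ => dihedralReflection (-1)).support +
        #(permOfSigma e fun _ => dihedralReflection 0).support + 2 * Fintype.card ι =
      2 * Fintype.card α := by
  calc _ = ∑ i, (#(dihedralReflection (-1 : ZMod (n i))).support +
          #(dihedralReflection (0 : ZMod (n i))).support + 2) := by
        simp only [card_support_permOfSigma, sum_add_distrib, sum_const, card_univ, smul_eq_mul,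
          mul_comm]
    _ = ∑ i, 2 * n i := by
        simp only [card_support_dihedralReflection_neg_one_add_zero]
    _ = 2 * Fintype.card α := by
        simp only [← mul_sum, Fintype.card_congr e, Fintype.card_sigma, ZMod.card]

end SigmaCoordinates

section OrbitCoordinates

variable {G α : Type*} [Group G] [MulAction G α] (g : G)

/-- Cyclic coordinates on the orbits of `g`: `⟨ω, k⟩` stands for `g ^ k` applied to the chosen
representative of the orbit `ω`. Infinite orbits have `minimalPeriod` zero and are indexed by
`ZMod 0 = ℤ`. -/
noncomputable def orbitCoordinates :
    α ≃ Σ ω : orbitRel.Quotient (zpowers g) α, ZMod (minimalPeriod (g • ·) ω.out) :=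
  (selfEquivSigmaOrbits (zpowers g) α).trans
    (Equiv.sigmaCongrRight fun ω => orbitZPowersEquiv g ω.out)

theorem orbitCoordinates_symm_intCast (ω : orbitRel.Quotient (zpowers g) α) (m : ℤ) :
    (orbitCoordinates g).symm ⟨ω, m⟩ = g ^ m • ω.out :=
  congrArg Subtype.val (orbitZPowersEquiv_symm_apply' g ω.out m)

theorem permOfSigma_orbitCoordinates_addRight_one :
    permOfSigma (orbitCoordinates g) (fun _ => Equiv.addRight 1) = toPerm (β := α) g := by
  ext x
  obtain ⟨⟨ω, k⟩, rfl⟩ := (orbitCoordinates g).symm.surjective x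
  obtain ⟨m, rfl⟩ := ZMod.intCast_surjective k
  calc permOfSigma (orbitCoordinates g) (fun _ => Equiv.addRight 1)
        ((orbitCoordinates g).symm ⟨ω, m⟩)
      = (orbitCoordinates g).symm ⟨ω, ((m + 1 : ℤ) : ZMod _)⟩ := by
        rw [permOfSigma_apply_symm, Equiv.coe_addRight, Int.cast_add, Int.cast_one]
    _ = g • (orbitCoordinates g).symm ⟨ω, m⟩ := by
        rw [orbitCoordinates_symm_intCast, orbitCoordinates_symm_intCast, add_comm, zpow_one_add,
          mul_smul]

end OrbitCoordinates

theorem perm_two_involution_layers_general {α : Type*} [Fintype α] [DecidableEq α] (σ : Perm α) :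
    ∃ τ₁ τ₂ : Perm α, τ₁ * τ₁ = 1 ∧ τ₂ * τ₂ = 1 ∧ σ = τ₂ * τ₁ ∧
      #τ₁.support + #τ₂.support =
        2 * (Fintype.card α - Nat.card (orbitRel.Quotient (zpowers σ) α)) := by
  have := Fintype.ofFinite (orbitRel.Quotient (zpowers σ) α)
  have (ω : orbitRel.Quotient (zpowers σ) α) : NeZero (minimalPeriod (σ • ·) ω.out) :=
    minimalPeriod_pos σ ω.out
  let e := orbitCoordinates (α := α) σ
  refine ⟨permOfSigma e fun _ => dihedralReflection (-1),
    permOfSigma e fun _ => dihedralReflection 0, permOfSigma_dihedralReflection_mul_self e _,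
    permOfSigma_dihedralReflection_mul_self e _, ?_, ?_⟩
  · rw [permOfSigma_dihedralReflection_mul]
    simp only [zero_sub, neg_neg]
    exact (permOfSigma_orbitCoordinates_addRight_one σ).symm
  · have card_moved := card_support_permOfSigma_dihedralReflection e
    rw [Nat.card_eq_fintype_card]
    omega

end

/-- On a fully connected architecture every permutation `σ` of `L` qubits factors into
two layers of disjoint swaps (involutions `τ₁`, `τ₂`) using `L - c` swaps in total,
where `c` is the number of cycles of `σ` (orbits of the cyclic group it generates,
counting fixed points): `σ = τ₂ * τ₁` with
`|support τ₁| + |support τ₂| = 2 (L - c)`. -/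
theorem perm_two_involution_layers (L : ℕ) (hL : 0 < L) (σ : Equiv.Perm (Fin L)) :
    ∃ τ₁ τ₂ : Equiv.Perm (Fin L),
      τ₁ * τ₁ = 1 ∧ τ₂ * τ₂ = 1 ∧ σ = τ₂ * τ₁ ∧
      τ₁.support.card + τ₂.support.card =
        2 * (L - Nat.card (MulAction.orbitRel.Quotient (Subgroup.zpowers σ) (Fin L))) := by
  simpa only [Fintype.card_fin] using perm_two_involution_layers_general σ
end

section
/- Let L be a positive natural number and define δ : ℝ → ℝ by δ(p) = (1/L!) · Σ_{σ : Equiv.Perm (Fin L)} 4^{c(σ)} · (4 - 3p)^{L - c(σ)}, where c(σ) is the number of orbits of the cyclic group generated by σ acting on Fin L. Then δ(0) = 4^L and the derivative of δ at p = 0 equals -(3/4) · 4^L · (L - H_L), where H_L = Σ_{k=1}^{L} 1/k; consequently -δ'(0)/δ(0) = (3/4)(L - H_L). -/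
/-!
For any finite `α` with `n` elements,
`∑ σ : Equiv.Perm α, a ^ c(σ) * b ^ (n - c(σ)) = ∏ k < n, (a + k * b)`: a permutation of
`Option α` either fixes `none`, which is one more cycle, or arises from a permutation of `α` by
inserting `none` into the cycle of one of the `n` points, which leaves the number of cycles
unchanged. So passing from `α` to `Option α` multiplies the sum by `a + n * b`.

With `a = 4` and `b = 4 - 3 * p`, division by `n! = ∏ k < n, (k + 1)` gives
`δ(p) = ∏ k < n, (4 - 3 * (k / (k + 1)) * p)`. Every factor is `4` at `p = 0`, and the logarithmic
derivative there is `-(3 / 4) * ∑ k < n, k / (k + 1) = -(3 / 4) * (n - H_n)`.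
-/

open Equiv Finset

/-- The cycles of a permutation, fixed points included, as the orbits of the subgroup it
generates. -/
abbrev Cycles {α : Type*} (σ : Perm α) : Type _ :=
  MulAction.orbitRel.Quotient (Subgroup.zpowers σ) α

namespace Cycles

variable {α β : Type*} {σ : Perm α}

/-- The cycle of `σ` through a point. -/
def mk (σ : Perm α) (x : α) : Cycles σ := Quotient.mk _ x

theorem mk_apply (σ : Perm α) (x : α) : mk σ (σ x) = mk σ x :=
  Quotient.sound ⟨⟨σ, Subgroup.mem_zpowers σ⟩, rfl⟩

theorem mk_surjective (σ : Perm α) : Function.Surjective (mk σ) := Quotient.mk_surjective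

theorem apply_zpow_apply_of_invariant {f : α → β} (hf : ∀ x, f (σ x) = f x) (k : ℤ) (x : α) :
    f ((σ ^ k) x) = f x := by
  induction k generalizing x with
  | zero => rfl
  | succ k ih => rw [zpow_add_one, Perm.mul_apply, ih, hf]
  | pred k ih => rw [zpow_sub_one, Perm.mul_apply, ih, ← hf, ← Perm.mul_apply, mul_inv_cancel,
      Perm.one_apply]

/-- The function on cycles induced by a `σ`-invariant function on points. -/
def lift (f : α → β) (hf : ∀ x, f (σ x) = f x) : Cycles σ → β :=
  Quotient.lift f fun _ y ⟨⟨_, k, hk⟩, hxy⟩ => by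
    subst hk hxy
    exact apply_zpow_apply_of_invariant hf k y

@[simp]
theorem lift_mk (f : α → β) (hf : ∀ x, f (σ x) = f x) (x : α) : lift f hf (mk σ x) = f x := rfl

end Cycles

section cycleCount

variable {α β : Type*}

/-- The number `c(σ)` of cycles of `σ`, fixed points included; as a `Nat.card`, it is `0` when `σ`
has infinitely many cycles. -/
noncomputable def cycleCount (σ : Perm α) : ℕ := Nat.card (Cycles σ)

theorem cycleCount_le_card [Fintype α] (σ : Perm α) : cycleCount σ ≤ Fintype.card α := by
  simpa [cycleCount] using Nat.card_le_card_of_surjective _ (Cycles.mk_surjective σ)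

theorem cycleCount_permCongr (e : α ≃ β) (σ : Perm α) :
    cycleCount (e.permCongr σ) = cycleCount σ := by
  refine Nat.card_congr
    { toFun := Cycles.lift (fun y => Cycles.mk σ (e.symm y)) fun y => ?_
      invFun := Cycles.lift (fun x => Cycles.mk (e.permCongr σ) (e x)) fun x => ?_
      left_inv := (Cycles.mk_surjective _).forall.2 fun y => by simp
      right_inv := (Cycles.mk_surjective _).forall.2 fun x => by simp }
  · simp [Cycles.mk_apply]
  · simpa using Cycles.mk_apply (e.permCongr σ) (e x)

theorem cycleCount_optionCongr [Finite α] (σ : Perm α) :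
    cycleCount (optionCongr σ) = cycleCount σ + 1 := by
  rw [cycleCount, cycleCount, ← Finite.card_option]
  refine Nat.card_congr
    { toFun := Cycles.lift (Option.map (Cycles.mk σ)) fun x => ?_
      invFun := fun o => o.elim (Cycles.mk _ none)
        (Cycles.lift (fun x => Cycles.mk (optionCongr σ) (some x)) fun x => ?_)
      left_inv := (Cycles.mk_surjective _).forall.2 fun x => by cases x <;> rfl
      right_inv := Option.forall.2 ⟨rfl, (Cycles.mk_surjective σ).forall.2 fun _ => rfl⟩ }
  · cases x <;> simp [Cycles.mk_apply]
  · exact Cycles.mk_apply (optionCongr σ) (some x)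

theorem cycleCount_swap_mul_optionCongr [DecidableEq α] (a : α) (σ : Perm α) :
    cycleCount (swap none (some a) * optionCongr σ) = cycleCount σ := by
  set τ := swap none (some a) * optionCongr σ with hτ
  have τ_none : τ none = some a := by simp [hτ]
  have τ_some (x : α) : τ (some x) = if σ x = a then none else some (σ x) := by
    simp [hτ, swap_apply_def]
  have mk_none : Cycles.mk τ none = Cycles.mk τ (some a) := by rw [← τ_none, Cycles.mk_apply]
  refine Nat.card_congr
    { toFun := Cycles.lift (fun o => Cycles.mk σ (o.getD a)) fun o => ?_
      invFun := Cycles.lift (fun x => Cycles.mk τ (some x)) fun x => ?_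
      left_inv := (Cycles.mk_surjective τ).forall.2 fun o => by cases o <;> simp [mk_none]
      right_inv := (Cycles.mk_surjective σ).forall.2 fun _ => rfl }
  · rcases o with _ | x
    · simp [τ_none]
    · rw [τ_some, ← Cycles.mk_apply σ ((some x).getD a)]
      split_ifs with hx <;> simp [hx]
  · rw [← Cycles.mk_apply τ (some x), τ_some]
    split_ifs with hx
    · rw [hx, mk_none]
    · rfl

end cycleCount

section cycleEnumerator

variable {R : Type*} [CommSemiring R] {α β : Type*} [Fintype α] [DecidableEq α]
  [Fintype β] [DecidableEq β]

variable (α) in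
/-- The homogeneous enumerator of the permutations of `α` by their number of cycles: `a` marks the
cycles, and the power of `b` makes the total degree the cardinality of `α`. -/
noncomputable def cycleEnumerator (a b : R) : R :=
  ∑ σ : Perm α, a ^ cycleCount σ * b ^ (Fintype.card α - cycleCount σ)

theorem cycleEnumerator_congr (e : α ≃ β) (a b : R) :
    cycleEnumerator α a b = cycleEnumerator β a b :=
  Fintype.sum_equiv e.permCongr _ _ fun σ => by rw [cycleCount_permCongr, Fintype.card_congr e]

variable (α)

theorem cycleEnumerator_option (a b : R) :
    cycleEnumerator (Option α) a b = (a + Fintype.card α * b) * cycleEnumerator α a b := by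
  have insert_none (σ : Perm α) (x : α) :
      a ^ cycleCount (swap none (some x) * optionCongr σ) *
          b ^ (Fintype.card α + 1 - cycleCount (swap none (some x) * optionCongr σ)) =
        b * (a ^ cycleCount σ * b ^ (Fintype.card α - cycleCount σ)) := by
    rw [cycleCount_swap_mul_optionCongr, Nat.sub_add_comm (cycleCount_le_card σ)]
    ring
  have fix_none (σ : Perm α) :
      a ^ cycleCount (optionCongr σ) *
          b ^ (Fintype.card α + 1 - cycleCount (optionCongr σ)) =
        a * (a ^ cycleCount σ * b ^ (Fintype.card α - cycleCount σ)) := by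
    rw [cycleCount_optionCongr, Nat.add_sub_add_right]
    ring
  simp only [cycleEnumerator, Fintype.card_option]
  rw [← Perm.decomposeOption.symm.sum_comp, Fintype.sum_prod_type, Fintype.sum_option]
  simp only [Perm.decomposeOption_symm_apply, swap_self, ← Perm.one_def, one_mul, fix_none,
    insert_none, ← mul_sum, sum_const, card_univ, nsmul_eq_mul]
  ring

theorem cycleEnumerator_eq_prod (a b : R) :
    cycleEnumerator α a b = ∏ k ∈ range (Fintype.card α), (a + k * b) := by
  have cycleEnumerator_fin (n : ℕ) : cycleEnumerator (Fin n) a b = ∏ k ∈ range n, (a + k * b) := by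
    induction n with
    | zero => simp [cycleEnumerator, cycleCount]
    | succ n ih =>
      rw [cycleEnumerator_congr (finSuccEquiv n), cycleEnumerator_option, ih, Fintype.card_fin,
        prod_range_succ, mul_comm]
  rw [cycleEnumerator_congr (Fintype.equivFin α), cycleEnumerator_fin]

theorem inv_factorial_mul_cycleEnumerator {K : Type*} [Field K] [CharZero K] (a b : K) :
    ((Fintype.card α).factorial : K)⁻¹ * cycleEnumerator α a (a - b) =
      ∏ k ∈ range (Fintype.card α), (a - k / (k + 1) * b) := by
  have factor (k : ℕ) : a + k * (a - b) = (k + 1) * (a - k / (k + 1) * b) := by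
    field_simp
    ring
  have factorial_eq : ((Fintype.card α).factorial : K) =
      ∏ k ∈ range (Fintype.card α), ((k : K) + 1) := by
    simp [← prod_range_add_one_eq_factorial]
  simp only [cycleEnumerator_eq_prod, factor, prod_mul_distrib, ← factorial_eq]
  exact inv_mul_cancel_left₀ (Nat.cast_ne_zero.2 (Nat.factorial_ne_zero _)) _

end cycleEnumerator

theorem logDeriv_prod_sub_mul_at_zero {ι 𝕜 : Type*} [NontriviallyNormedField 𝕜] (s : Finset ι)
    {a : 𝕜} (ha : a ≠ 0) (r : ι → 𝕜) :
    logDeriv (fun p => ∏ i ∈ s, (a - r i * p)) 0 = -(∑ i ∈ s, r i) / a := by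
  have factor (i : ι) : HasDerivAt (fun p => a - r i * p) (-r i) 0 := by
    simpa using ((hasDerivAt_id (0 : 𝕜)).const_mul (r i)).const_sub a
  rw [logDeriv_prod (by simpa using fun _ _ => ha) fun i _ => (factor i).differentiableAt]
  simp [logDeriv_apply, (factor _).deriv, neg_div, sum_div]

theorem sum_range_div_add_one {K : Type*} [Field K] [CharZero K] (n : ℕ) :
    ∑ k ∈ range n, (k / (k + 1) : K) = n - harmonic n := by
  have term (k : ℕ) : (k / (k + 1) : K) = 1 - (k + 1 : K)⁻¹ := by
    field_simp
    ring
  simp [term, harmonic]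

/-- For the average error factor
`δ(p) = (1/L!) Σ_σ 4^{c(σ)} (4-3p)^{L-c(σ)}` of faulty permutations on a fully
connected architecture, `δ(0) = 4^L` and `δ'(0) = -(3/4)·4^L·(L - H_L)`, so that
`-δ'(0)/δ(0) = (3/4)(L - H_L)`, with `H_L` the `L`-th harmonic number and `c(σ)` the
number of cycles of `σ` (orbits of the generated cyclic group, counting fixed points). -/
theorem error_factor_deriv_at_zero (L : ℕ) (hL : 0 < L) :
    let c : Equiv.Perm (Fin L) → ℕ := fun σ =>
      Nat.card (MulAction.orbitRel.Quotient (Subgroup.zpowers σ) (Fin L))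
    let δ : ℝ → ℝ := fun p =>
      (1 / (Nat.factorial L : ℝ)) *
        ∑ σ : Equiv.Perm (Fin L), (4 : ℝ) ^ c σ * (4 - 3 * p) ^ (L - c σ)
    let H : ℝ := ∑ k ∈ Finset.Icc 1 L, (1 : ℝ) / k
    δ 0 = 4 ^ L ∧
      deriv δ 0 = -(3 / 4) * 4 ^ L * ((L : ℝ) - H) ∧
      -(deriv δ 0) / δ 0 = (3 / 4) * ((L : ℝ) - H) := by
  intro c δ H
  have δ_eq_prod : δ = fun p => ∏ k ∈ range L, (4 - 3 * ((k : ℝ) / (k + 1)) * p) := by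
    funext p
    simpa [δ, c, cycleEnumerator, cycleCount, Cycles, mul_assoc, mul_left_comm] using
      inv_factorial_mul_cycleEnumerator (Fin L) 4 (3 * p)
  have δ_zero : δ 0 = 4 ^ L := by simp [δ_eq_prod]
  have H_eq_harmonic : H = harmonic L := by simp [H, harmonic_eq_sum_Icc]
  have logDeriv_δ : logDeriv δ 0 = -(3 / 4) * (L - H) := by
    rw [δ_eq_prod, logDeriv_prod_sub_mul_at_zero _ four_ne_zero, ← mul_sum, sum_range_div_add_one,
      H_eq_harmonic]
    ring
  refine ⟨δ_zero, ?_, ?_⟩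
  · rw [logDeriv_apply, δ_zero, div_eq_iff (by positivity)] at logDeriv_δ
    rw [logDeriv_δ]
    ring
  · rw [neg_div, ← logDeriv_apply, logDeriv_δ]
    ring
end

section
/- Let G be a connected simple graph on a finite nonempty vertex set V, and let σ be a permutation of V that can be written as a product σ = τ_t ∘ ⋯ ∘ τ_2 ∘ τ_1 of t transpositions, where each τ_s = swap(a_s, b_s) with a_s and b_s adjacent in G. Then Σ_{v ∈ V} dist_G(v, σ(v)) ≤ 2t, where dist_G denotes the graph distance in G. -/
/-! Displacement is measured by the `ℕ∞`-valued distance, for which the triangle inequality holds in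
every graph. By the triangle inequality through `τ v`, reindexed along the bijection `τ`, the total
displacement of `σ * τ` is at most the sum of those of `σ` and `τ`; and swapping the ends of an edge
moves only these two vertices, each by distance one. -/

open Equiv

/-- The total displacement `∑ v, dist_G(v, σ v)` of a permutation `σ` of the vertices of `G`. It is
a sum of extended distances in `ℕ∞`, so that it is meaningful on infinite vertex sets and is `⊤` as
soon as `σ` moves a vertex out of its connected component. -/
noncomputable def totalDisplacement {V : Type*} (G : SimpleGraph V) (σ : Perm V) : ℕ∞ :=
  ∑' v, G.edist v (σ v)

theorem summable_of_completeLinearOrder {ι α : Type*} [AddCommMonoid α] [CompleteLinearOrder α]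
    [CanonicallyOrderedAdd α] [TopologicalSpace α] [OrderTopology α] (f : ι → α) : Summable f :=
  (hasSum_of_isLUB _ isLUB_iSup).summable

section totalDisplacement

variable {V : Type*} (G : SimpleGraph V)

theorem totalDisplacement_one : totalDisplacement G 1 = 0 := by
  simp [totalDisplacement]

theorem totalDisplacement_mul_le (σ τ : Perm V) :
    totalDisplacement G (σ * τ) ≤ totalDisplacement G σ + totalDisplacement G τ :=
  calc ∑' v, G.edist v (σ (τ v))
    _ ≤ ∑' v, (G.edist v (τ v) + G.edist (τ v) (σ (τ v))) :=
      (summable_of_completeLinearOrder _).tsum_le_tsum (fun _ ↦ G.edist_triangle)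
        (summable_of_completeLinearOrder _)
    _ = ∑' v, G.edist v (τ v) + ∑' v, G.edist (τ v) (σ (τ v)) :=
      (summable_of_completeLinearOrder _).tsum_add (summable_of_completeLinearOrder _)
    _ = ∑' v, G.edist v (σ v) + ∑' v, G.edist v (τ v) := by
      rw [τ.tsum_eq fun v ↦ G.edist v (σ v), add_comm]

theorem totalDisplacement_list_prod_le (l : List (Perm V)) :
    totalDisplacement G l.prod ≤ (l.map (totalDisplacement G)).sum := by
  induction l with
  | nil => simp [totalDisplacement_one]
  | cons σ l ih =>
    grw [List.prod_cons, List.map_cons, List.sum_cons, totalDisplacement_mul_le, ih]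

theorem totalDisplacement_swap [DecidableEq V] (a b : V) :
    totalDisplacement G (swap a b) = 2 * G.edist a b := by
  obtain rfl | hab := eq_or_ne a b
  · rw [swap_self, ← Perm.one_def, totalDisplacement_one, SimpleGraph.edist_self, mul_zero]
  · have hfix : ∀ v ∉ ({a, b} : Finset V), G.edist v (swap a b v) = 0 := fun v hv ↦ by
      simp only [Finset.mem_insert, Finset.mem_singleton, not_or] at hv
      rw [swap_apply_of_ne_of_ne hv.1 hv.2, SimpleGraph.edist_self]
    rw [totalDisplacement, tsum_eq_sum hfix, Finset.sum_pair hab, swap_apply_left,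
      swap_apply_right, SimpleGraph.edist_comm (u := b), two_mul]

theorem sum_dist_le_totalDisplacement [Fintype V] (σ : Perm V) :
    ((∑ v, G.dist v (σ v) : ℕ) : ℕ∞) ≤ totalDisplacement G σ := by
  rw [totalDisplacement, tsum_fintype, Nat.cast_sum]
  exact Finset.sum_le_sum fun v _ ↦ ENat.natCast_toNat_le_self _

end totalDisplacement

theorem total_displacement_le_two_mul_swaps_general {V : Type*} [DecidableEq V]
    (G : SimpleGraph V) (l : List (V × V)) (hadj : ∀ p ∈ l, G.Adj p.1 p.2) :
    totalDisplacement G (l.map fun p ↦ swap p.1 p.2).prod ≤ 2 * l.length := by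
  have hswap : ∀ p ∈ l, totalDisplacement G (swap p.1 p.2) = 2 := fun p hp ↦ by
    rw [totalDisplacement_swap, SimpleGraph.edist_eq_one_iff_adj.mpr (hadj p hp), mul_one]
  calc totalDisplacement G (l.map fun p ↦ swap p.1 p.2).prod
    _ ≤ (l.map fun p ↦ totalDisplacement G (swap p.1 p.2)).sum := by
      simpa only [List.map_map, Function.comp_def] using
        totalDisplacement_list_prod_le G (l.map fun p ↦ swap p.1 p.2)
    _ = 2 * l.length := by
      rw [List.map_congr_left hswap, List.map_const', List.sum_replicate, nsmul_eq_mul, mul_comm]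

/-- If a permutation `σ` of the vertices of a connected graph `G` is a product of `t`
transpositions of adjacent vertices, then the total displacement satisfies
`Σ_v dist_G(v, σ v) ≤ 2t`: each nearest-neighbour swap decreases the total
displacement by at most `2`. -/
theorem total_displacement_le_two_mul_swaps {V : Type*} [Fintype V] [DecidableEq V]
    [Nonempty V] (G : SimpleGraph V) (hG : G.Connected)
    (l : List (V × V)) (hadj : ∀ p ∈ l, G.Adj p.1 p.2)
    (σ : Equiv.Perm V) (hσ : σ = (l.map fun p => Equiv.swap p.1 p.2).prod) :
    ∑ v : V, G.dist v (σ v) ≤ 2 * l.length := by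
  subst hσ
  exact_mod_cast (sum_dist_le_totalDisplacement G _).trans
    (total_displacement_le_two_mul_swaps_general G l hadj)
end

section
/- Let n and d be positive natural numbers and call two points x, y : Fin d → Fin n of the d-dimensional grid adjacent if they differ in exactly one coordinate and in that coordinate by exactly 1. Then every permutation σ of Fin d → Fin n can be written as a product σ = π_t ∘ ⋯ ∘ π_1 of t involutions (layers), each π_s satisfying: for every point v, either π_s(v) = v or v and π_s(v) are adjacent, such that t ≤ (2d - 1) · n and the total number of transpositions Σ_{s=1}^{t} (card of support of π_s) / 2 ≤ ((2d - 1)/2) · n^{d+1}. -/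
/-- Nearest-neighbour adjacency of the `d`-dimensional cubic grid of side `n`:
two points are adjacent iff they agree in all coordinates but one, where they
differ by exactly `1`. -/
def gridAdj (n d : ℕ) (x y : Fin d → Fin n) : Prop :=
  ∃ i : Fin d, (∀ j : Fin d, j ≠ i → x j = y j) ∧
    ((x i : ℕ) + 1 = (y i : ℕ) ∨ (y i : ℕ) + 1 = (x i : ℕ))

/-!
Only the number of layers matters: a layer moves at most `n ^ d` points, so it contains at most
`n ^ d / 2` swaps.

*Products.* View a permutation of `A × B` as the edge set of a bipartite multigraph between two
copies of `B`, a point `x` joining its own column to the column of its target. This multigraph is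
`|A|`-regular, so by Kőnig's theorem its edges are properly coloured by `A`. Moving each point to
the row given by its colour, then to its target column, then to its target row, only ever moves
points inside rows or columns. Hence routing in `G □ H` costs at most the routing in `H` plus twice
the routing in `G`; with `G` a path of length `n` this gives `n + (2 * d - 1) * n + n` layers in
dimension `d + 1`.

*Paths.* Odd-even transposition sort sorts `n` values in `n` rounds. For a threshold `k`, let `N q`
count the positions `i ≥ q` holding a value at least `k`. A round leaves `N q` unchanged for `q` of
one parity, and replaces it by `min (N (q - 1)) (N (q + 1) + 1)` for `q` of the other parity. By
induction this forces the large values to the right at unit speed.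
-/

/-! ### Kőnig's edge colouring theorem

A bipartite multigraph between `A` and `B` is given by a finite set `S` of edges and by maps
`s : E → A` and `t : E → B` sending an edge to its end points. -/

section EdgeColouring

open Finset

variable {E A B κ : Type*}

theorem injOn_ite_mem [DecidableEq E] {f : E → A} {c : E → κ} {C : Finset κ} {i : κ}
    {S M : Finset E} (hM : Set.InjOn f M) (hi : i ∉ C) (hC : ∀ e ∈ S \ M, c e ∈ C)
    (hc : Set.InjOn (fun e => (f e, c e)) ↑(S \ M)) :
    Set.InjOn (fun e => (f e, if e ∈ M then i else c e)) S := by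
  intro x hx y hy h
  have := @hM x
  have := @hc x
  grind

variable [DecidableEq A] [DecidableEq B]

theorem card_le_card_neighbours [Fintype B] {s : E → A} {t : E → B} {S : Finset E} {k : ℕ}
    (hk : 0 < k) (hs : ∀ a, k ≤ #{e ∈ S | s e = a}) (ht : ∀ b, #{e ∈ S | t e = b} ≤ k)
    (X : Finset A) :
    #X ≤ #{b | ∃ a ∈ X, ∃ e ∈ S, s e = a ∧ t e = b} := by
  set Y : Finset B := {b | ∃ a ∈ X, ∃ e ∈ S, s e = a ∧ t e = b}
  refine Nat.le_of_mul_le_mul_right ?_ hk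
  calc #X * k
      ≤ ∑ a ∈ X, #{e ∈ S | s e = a} := card_nsmul_le_sum _ _ _ fun a _ => hs a
    _ = #{e ∈ S | s e ∈ X} := sum_card_fiberwise_eq_card_filter ..
    _ ≤ #{e ∈ S | t e ∈ Y} := card_le_card fun e he => by
        simp only [mem_filter, mem_univ, true_and, Y] at he ⊢
        exact ⟨he.1, s e, he.2, e, he.1, rfl, rfl⟩
    _ = ∑ b ∈ Y, #{e ∈ S | t e = b} := (sum_card_fiberwise_eq_card_filter ..).symm
    _ ≤ #Y * k := sum_le_card_nsmul _ _ _ fun b _ => ht b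

theorem exists_injective_matching [Finite B] {s : E → A} {t : E → B} {S : Finset E} {k : ℕ}
    (hk : 0 < k) (hs : ∀ a, k ≤ #{e ∈ S | s e = a}) (ht : ∀ b, #{e ∈ S | t e = b} ≤ k) :
    ∃ m : A → E, (∀ a, m a ∈ S) ∧ (∀ a, s (m a) = a) ∧ Function.Injective (t ∘ m) := by
  cases nonempty_fintype B
  obtain ⟨f, hf, hm⟩ := (Fintype.all_card_le_filter_rel_iff_exists_injective
    fun a b => ∃ e ∈ S, s e = a ∧ t e = b).1 (card_le_card_neighbours hk hs ht)
  choose m hmS hms hmt using hm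
  exact ⟨m, hmS, hms, (funext hmt : t ∘ m = f) ▸ hf⟩

theorem exists_perfect_matching [Finite A] [Finite B] {s : E → A} {t : E → B} {S : Finset E}
    {k : ℕ} (hk : 0 < k) (hs : ∀ a, #{e ∈ S | s e = a} = k) (ht : ∀ b, #{e ∈ S | t e = b} = k) :
    ∃ M ⊆ S, Set.BijOn s M Set.univ ∧ Set.BijOn t M Set.univ := by
  cases nonempty_fintype A
  cases nonempty_fintype B
  obtain ⟨m, hmS, hms, hm⟩ :=
    exists_injective_matching hk (fun a => (hs a).ge) (fun b => (ht b).le)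
  obtain ⟨m', -, -, hm'⟩ :=
    exists_injective_matching hk (fun b => (ht b).ge) (fun a => (hs a).le)
  have hbij : Function.Bijective (t ∘ m) := (Fintype.bijective_iff_injective_and_card _).2
    ⟨hm, (Fintype.card_le_of_injective _ hm).antisymm (Fintype.card_le_of_injective _ hm')⟩
  classical
  have hminj : Set.InjOn m Set.univ := hm.of_comp.injOn
  refine ⟨univ.image m, image_subset_iff.2 fun a _ => hmS a, ?_, ?_⟩ <;>
    rw [coe_image, coe_univ, ← Set.bijOn_comp_iff hminj, Set.bijOn_univ]
  · exact (funext hms : s ∘ m = id) ▸ Function.bijective_id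
  · exact hbij

theorem card_filter_sdiff_add_one [DecidableEq E] {f : E → A} {S M : Finset E} (hMS : M ⊆ S)
    (hM : Set.BijOn f M Set.univ) (a : A) :
    #{e ∈ S \ M | f e = a} + 1 = #{e ∈ S | f e = a} := by
  obtain ⟨e, he, rfl⟩ := hM.surjOn (Set.mem_univ a)
  have : {x ∈ S \ M | f x = f e} = {x ∈ S | f x = f e}.erase e := by
    ext x
    have hinj : x ∈ M → f x = f e → x = e := fun hx h => hM.injOn hx he h
    grind
  rw [this, card_erase_add_one (by simpa using hMS he)]

theorem exists_edge_colouring [Finite A] [Finite B] [Nonempty κ] {s : E → A} {t : E → B}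
    {S : Finset E} (C : Finset κ) (hs : ∀ a, #{e ∈ S | s e = a} = #C)
    (ht : ∀ b, #{e ∈ S | t e = b} = #C) :
    ∃ c : E → κ, (∀ e ∈ S, c e ∈ C) ∧
      Set.InjOn (fun e => (s e, c e)) S ∧ Set.InjOn (fun e => (t e, c e)) S := by
  classical
  induction C using Finset.induction_on generalizing S with
  | empty =>
    obtain rfl : S = ∅ := eq_empty_of_forall_notMem fun e he =>
      (card_pos.2 ⟨e, by simpa using he⟩).ne' (hs (s e))
    exact ⟨fun _ => Classical.arbitrary κ, by simp⟩
  | insert i C hi ih =>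
    obtain ⟨M, hMS, hMs, hMt⟩ := exists_perfect_matching (by simp [hi]) hs ht
    simp only [card_insert_of_notMem hi, ← card_filter_sdiff_add_one hMS hMs,
      ← card_filter_sdiff_add_one hMS hMt, Nat.add_right_cancel_iff] at hs ht
    obtain ⟨c, hcC, hcs, hct⟩ := ih hs ht
    exact ⟨fun e => if e ∈ M then i else c e, by grind,
      injOn_ite_mem hMs.injOn hi hcC hcs, injOn_ite_mem hMt.injOn hi hcC hct⟩

end EdgeColouring

section ThreePhase

open Equiv Function

variable {A B : Type*} [Finite A] [Finite B]

/- The colouring is the one of the multigraph with an edge from the column `x.2` to the column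
`(σ x).2` for each point `x`. -/
theorem exists_colouring_injective_prodMk (σ : Perm (A × B)) :
    ∃ c : A × B → A, Injective (fun x => (x.2, c x)) ∧ Injective (fun x => ((σ x).2, c x)) := by
  classical
  cases nonempty_fintype A
  cases nonempty_fintype B
  cases isEmpty_or_nonempty A
  · exact ⟨Prod.fst, injective_of_subsingleton _, injective_of_subsingleton _⟩
  have card_column (τ : Perm (A × B)) (b : B) :
      Finset.card {x : A × B | (τ x).2 = b} = Finset.card (Finset.univ : Finset A) := by
    have hcolumn : ({x : A × B | x.2 = b} : Finset _) = Finset.univ ×ˢ {b} := by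
      ext ⟨a, b'⟩
      simp [eq_comm]
    have hτ := Finset.card_equiv (s := {x | (τ x).2 = b}) (t := {x | x.2 = b}) τ (by simp)
    rw [hτ, hcolumn, Finset.card_product, Finset.card_singleton, mul_one]
  obtain ⟨c, -, hs, ht⟩ := exists_edge_colouring Finset.univ (card_column 1) (card_column σ)
  rw [Finset.coe_univ, Set.injOn_univ] at hs ht
  exact ⟨c, hs, ht⟩

theorem exists_eq_prodCongrLeft_mul_prodCongrRight_mul_prodCongrLeft (σ : Perm (A × B)) :
    ∃ (h : B → Perm A) (g : A → Perm B) (f : B → Perm A),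
      σ = prodCongrLeft h * prodCongrRight g * prodCongrLeft f := by
  obtain ⟨c, hsource, htarget⟩ := exists_colouring_injective_prodMk σ
  have hf (b : B) : Injective fun a => c (a, b) := fun a a' hc =>
    (Prod.ext_iff.1 (@hsource (a, b) (a', b) (Prod.ext rfl hc))).1
  have hh (b : B) : Injective fun a => c (σ.symm (a, b)) := fun a a' hc => by
    simpa using htarget (Prod.ext (by simp) hc)
  let f (b : B) : Perm A := .ofBijective _ (Finite.injective_iff_bijective.1 (hf b))
  let h (b : B) : Perm A := .ofBijective _ (Finite.injective_iff_bijective.1 (hh b))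
  have hc (a : A) (b : B) : c ((f b).symm a, b) = a := (f b).apply_symm_apply a
  have hg (a : A) : Injective fun b => (σ ((f b).symm a, b)).2 := fun b b' hb =>
    (Prod.ext_iff.1 (htarget (Prod.ext hb ((hc a b).trans (hc a b').symm)))).2
  let g (a : A) : Perm B := .ofBijective _ (Finite.injective_iff_bijective.1 (hg a))
  refine ⟨fun b => (h b).symm, g, f, Equiv.ext fun ⟨a, b⟩ => ?_⟩
  have hgf : g (f b a) b = (σ (a, b)).2 := by simp [g]
  have hhf : (h (σ (a, b)).2).symm (f b a) = (σ (a, b)).1 :=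
    (Equiv.symm_apply_eq _).2 (by simp [h, f])
  simp [hgf, hhf]

end ThreePhase

/-! ### Routing in graphs -/

section Routing

open Equiv Function
open scoped Pointwise

variable {V W : Type*} {G : SimpleGraph V} {H : SimpleGraph W} {S T : ℕ}

/-- The layers of a graph: the involutions moving each vertex to itself or to a neighbour. -/
def layers (G : SimpleGraph V) : Set (Perm V) :=
  {π | π * π = 1 ∧ ∀ v, π v = v ∨ G.Adj v (π v)}

/-- `Routable G T` says that every permutation of the vertices of `G` is a product of `T` layers,
that is, the routing number of `G` is at most `T`. As `1` is a layer, it does not matter whether `T`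
is the exact number of layers or an upper bound. -/
def Routable (G : SimpleGraph V) (T : ℕ) : Prop :=
  ∀ σ : Perm V, σ ∈ layers G ^ T

theorem toPerm_mem_layers {f : V → V} (hf : Involutive f) (h : ∀ v, f v = v ∨ G.Adj v (f v)) :
    hf.toPerm ∈ layers G :=
  ⟨Equiv.ext hf, h⟩

theorem exists_list_of_mem_layers_pow {σ : Perm V} (hσ : σ ∈ layers G ^ T) :
    ∃ l : List (Perm V), σ = l.prod ∧ (∀ π ∈ l, π ∈ layers G) ∧ l.length = T := by
  obtain ⟨f, rfl⟩ := Set.mem_pow.1 hσ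
  exact ⟨_, rfl, by simp [List.mem_ofFn'], List.length_ofFn⟩

theorem permCongr_mem_layers_pow (e : G ≃g H) {σ : Perm V} (hσ : σ ∈ layers G ^ T) :
    e.toEquiv.permCongr σ ∈ layers H ^ T := by
  have permCongr_layers : e.toEquiv.permCongrHom '' layers G ⊆ layers H := by
    rintro _ ⟨π, ⟨hinv, hadj⟩, rfl⟩
    refine ⟨by rw [← map_mul, hinv, map_one], fun w => ?_⟩
    obtain ⟨v, rfl⟩ := e.surjective w
    change e (π (e.symm (e v))) = e v ∨ H.Adj (e v) (e (π (e.symm (e v))))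
    simpa only [e.symm_apply_apply, e.injective.eq_iff, e.map_adj_iff] using hadj v
  have := Set.mem_image_of_mem e.toEquiv.permCongrHom hσ
  rw [Set.image_pow] at this
  exact Set.pow_subset_pow_left permCongr_layers this

theorem Routable.of_iso (e : G ≃g H) (hG : Routable G T) : Routable H T := fun σ => by
  have := permCongr_mem_layers_pow e (hG (e.toEquiv.permCongr.symm σ))
  rwa [Equiv.apply_symm_apply] at this

theorem prodCongrRight_mem_layers_boxProd (G : SimpleGraph V) {f : V → Perm W}
    (hf : ∀ v, f v ∈ layers H) : prodCongrRight f ∈ layers (G □ H) := by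
  refine ⟨Equiv.ext fun ⟨v, w⟩ => ?_, fun ⟨v, w⟩ => ?_⟩
  · simpa using DFunLike.congr_fun (hf v).1 w
  · simpa using (hf v).2 w

theorem prodCongrRight_mem_layers_boxProd_pow (G : SimpleGraph V) {f : V → Perm W}
    (hf : ∀ v, f v ∈ layers H ^ T) : prodCongrRight f ∈ layers (G □ H) ^ T := by
  induction T generalizing f with
  | zero =>
    obtain rfl : f = 1 := funext hf
    rfl
  | succ T ih =>
    simp only [pow_succ, Set.mem_mul] at hf ⊢
    choose π hπ ρ hρ hf using hf
    exact ⟨_, ih hπ, _, prodCongrRight_mem_layers_boxProd G hρ, by ext <;> simp [← hf]⟩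

theorem prodCongrLeft_mem_layers_boxProd_pow (H : SimpleGraph W) {f : W → Perm V}
    (hf : ∀ w, f w ∈ layers G ^ T) : prodCongrLeft f ∈ layers (G □ H) ^ T :=
  permCongr_mem_layers_pow (SimpleGraph.boxProdComm H G)
    (prodCongrRight_mem_layers_boxProd_pow H hf)

theorem Routable.boxProd [Finite V] [Finite W] (hG : Routable G S) (hH : Routable H T) :
    Routable (G □ H) (S + T + S) := by
  intro σ
  obtain ⟨h, g, f, rfl⟩ := exists_eq_prodCongrLeft_mul_prodCongrRight_mul_prodCongrLeft σ
  rw [pow_add, pow_add]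
  exact Set.mul_mem_mul (Set.mul_mem_mul
    (prodCongrLeft_mem_layers_boxProd_pow H fun w => hG (h w))
    (prodCongrRight_mem_layers_boxProd_pow G fun v => hH (g v)))
    (prodCongrLeft_mem_layers_boxProd_pow H fun w => hG (f w))

theorem sum_card_support_div_two_le [Fintype V] [DecidableEq V] (l : List (Perm V)) :
    (l.map fun π => (π.support.card : ℚ) / 2).sum ≤ l.length * (Fintype.card V / 2) := by
  have h := List.sum_le_card_nsmul (l.map fun π => (π.support.card : ℚ) / 2)
    (Fintype.card V / 2) (List.forall_mem_map.2 fun π _ => by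
      gcongr
      exact Finset.card_le_univ _)
  rwa [List.length_map, nsmul_eq_mul] at h

end Routing

/-! ### Odd-even transposition sort -/

section PathGraph

open Equiv Finset Function SimpleGraph
open scoped Pointwise

variable {ι α : Type*} [LinearOrder ι] [LinearOrder α] {n : ℕ}

/-- The comparators of one round of a sorting network: for an involution `p` pairing the positions,
`compareExchange p w` swaps `i` and `p i` if the values of `w` there are out of order. -/
def compareExchange (p : ι → ι) (w : ι → α) (i : ι) : ι :=
  if (i < p i ∧ w (p i) < w i) ∨ (p i < i ∧ w i < w (p i)) then p i else i

theorem compareExchange_involutive {p : ι → ι} (hp : Involutive p) (w : ι → α) :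
    Involutive (compareExchange p w) := by
  intro i
  have := hp i
  grind [compareExchange]

theorem compareExchange_eq_or (p : ι → ι) (w : ι → α) (i : ι) :
    compareExchange p w i = i ∨ compareExchange p w i = p i := by
  grind [compareExchange]

theorem apply_compareExchange_of_lt {p : ι → ι} (w : ι → α) {i : ι} (hi : p i < i) :
    w (compareExchange p w i) = max (w (p i)) (w i) := by
  grind [compareExchange]

/-- The pairing of the positions in round `t` of odd-even transposition sort: `i` is paired with
`i + 1` for `i ≡ t mod 2`. At the two ends of the path, `min` and the truncated subtraction
`0 - 1 = 0` leave the unpaired positions alone. -/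
def oddEvenPartner (t : ℕ) (i : Fin n) : Fin n :=
  ⟨if (i : ℕ) % 2 = t % 2 then min (i + 1) (n - 1) else i - 1, by split_ifs <;> omega⟩

theorem oddEvenPartner_involutive (t : ℕ) : Involutive (oddEvenPartner t : Fin n → Fin n) := by
  intro i
  ext
  grind [oddEvenPartner]

theorem oddEvenPartner_eq_or_adj (t : ℕ) (i : Fin n) :
    oddEvenPartner t i = i ∨ (pathGraph n).Adj i (oddEvenPartner t i) := by
  rw [pathGraph_adj, Fin.ext_iff]
  grind [oddEvenPartner]

/-- Round `t` of odd-even transposition sort on the arrangement `w`. -/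
def oddEvenRound (t : ℕ) (w : Fin n → α) : Perm (Fin n) :=
  (compareExchange_involutive (oddEvenPartner_involutive t) w).toPerm

theorem oddEvenRound_mem_layers (t : ℕ) (w : Fin n → α) :
    oddEvenRound t w ∈ layers (pathGraph n) := by
  refine toPerm_mem_layers _ fun i => ?_
  rcases compareExchange_eq_or (oddEvenPartner t) w i with h | h
  · exact .inl h
  · exact h ▸ oddEvenPartner_eq_or_adj t i

theorem le_oddEvenRound_iff (w : Fin n → α) {t q : ℕ} (hq : q % 2 = t % 2) (i : Fin n) :
    q ≤ (oddEvenRound t w i : ℕ) ↔ q ≤ i := by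
  rcases compareExchange_eq_or (oddEvenPartner t) w i with h | h
  · rw [oddEvenRound, Involutive.coe_toPerm, h]
  · rw [oddEvenRound, Involutive.coe_toPerm, h]
    grind [oddEvenPartner]

theorem apply_oddEvenRound_succ (w : Fin n → α) {t q : ℕ} (hq : q % 2 = t % 2)
    (hqn : q + 1 < n) :
    w (oddEvenRound t w ⟨q + 1, hqn⟩) = max (w ⟨q, by omega⟩) (w ⟨q + 1, hqn⟩) := by
  have hp : oddEvenPartner t ⟨q + 1, hqn⟩ = ⟨q, by omega⟩ := by
    ext
    grind [oddEvenPartner]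
  have h := apply_compareExchange_of_lt w (p := oddEvenPartner t) (i := ⟨q + 1, hqn⟩)
    (by simp [hp])
  rwa [hp] at h

/-- The number of positions `i ≥ q` at which the value of `w` is at least `k`: the `N q` of the
proof idea, whose growth measures the progress of the sort. -/
def tailCount (w : Fin n → α) (k : α) (q : ℕ) : ℕ :=
  #{i : Fin n | q ≤ i ∧ k ≤ w i}

theorem tailCount_eq_add_ite (w : Fin n → α) (k : α) {q : ℕ} (hq : q < n) :
    tailCount w k q = tailCount w k (q + 1) + if k ≤ w ⟨q, hq⟩ then 1 else 0 := by
  have hi (i : Fin n) : i = ⟨q, hq⟩ ↔ (i : ℕ) = q := Fin.ext_iff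
  unfold tailCount
  split_ifs with h
  · rw [← card_insert_of_notMem (a := (⟨q, hq⟩ : Fin n)) (by simp)]
    congr 1
    grind
  · rw [add_zero]
    congr 1
    grind

theorem tailCount_zero_le_add (w : Fin n → α) (k : α) {q : ℕ} (hq : q ≤ n) :
    tailCount w k 0 ≤ tailCount w k q + q := by
  induction q with
  | zero => rfl
  | succ q ih =>
    have := ih (by omega)
    have := tailCount_eq_add_ite w k (q := q) (by omega)
    split_ifs at this <;> omega

theorem tailCount_comp_perm (w : Fin n → α) (k : α) {q : ℕ} {ρ : Perm (Fin n)}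
    (hρ : ∀ i, q ≤ (ρ i : ℕ) ↔ q ≤ i) : tailCount (w ∘ ρ) k q = tailCount w k q :=
  card_equiv ρ (by simp [hρ])

theorem tailCount_oddEvenRound_of_mod_eq (w : Fin n → α) (k : α) {t q : ℕ} (hq : q % 2 = t % 2) :
    tailCount (w ∘ oddEvenRound t w) k q = tailCount w k q :=
  tailCount_comp_perm w k (le_oddEvenRound_iff w hq)

theorem tailCount_oddEvenRound_succ (w : Fin n → α) (k : α) {t q : ℕ} (hq : q % 2 = t % 2)
    (hqn : q + 1 < n) :
    tailCount (w ∘ oddEvenRound t w) k (q + 1) =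
      min (tailCount w k q) (tailCount w k (q + 2) + 1) := by
  rw [tailCount_eq_add_ite _ k hqn, comp_apply, apply_oddEvenRound_succ w hq hqn,
    tailCount_oddEvenRound_of_mod_eq w k (q := q + 1 + 1) (by omega),
    tailCount_eq_add_ite w k (q := q) (by omega), tailCount_eq_add_ite w k hqn]
  simp only [le_max_iff]
  split_ifs <;> grind

/-- The arrangement of the values of `w` after `t` rounds of odd-even transposition sort. -/
def oddEvenSort (w : Fin n → α) : ℕ → Fin n → α
  | 0 => w
  | t + 1 => oddEvenSort w t ∘ oddEvenRound t (oddEvenSort w t)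

theorem exists_oddEvenSort_eq_comp (w : Fin n → α) (t : ℕ) :
    ∃ ρ ∈ layers (pathGraph n) ^ t, oddEvenSort w t = w ∘ ρ := by
  induction t with
  | zero => exact ⟨1, rfl, rfl⟩
  | succ t ih =>
    obtain ⟨ρ, hρ, h⟩ := ih
    exact ⟨ρ * oddEvenRound t (oddEvenSort w t),
      Set.mul_mem_mul hρ (oddEvenRound_mem_layers _ _), by
        rw [oddEvenSort, Perm.coe_mul, ← comp_assoc, ← h]⟩

theorem tailCount_oddEvenSort_zero (w : Fin n → α) (k : α) (t : ℕ) :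
    tailCount (oddEvenSort w t) k 0 = tailCount w k 0 := by
  obtain ⟨ρ, -, h⟩ := exists_oddEvenSort_eq_comp w t
  rw [h, tailCount_comp_perm w k (by simp)]

/- The correction `m % 2` aligns the rounding of the half-integer bound with the parity of the
rounds: the bound at `q` improves in round `t` only if `q ≢ t mod 2`. -/
theorem le_tailCount_oddEvenSort (w : Fin n → α) (k : α) {m : ℕ}
    (hm : tailCount w k 0 = m) (t : ℕ) {q : ℕ} (hq : q ≤ n) :
    min m (min (n - q) ((m + m % 2 + t - q) / 2)) ≤ tailCount (oddEvenSort w t) k q := by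
  induction t generalizing q with
  | zero =>
    have := tailCount_zero_le_add w k hq
    rw [oddEvenSort]
    omega
  | succ t ih =>
    rw [oddEvenSort]
    by_cases hqt : q % 2 = t % 2
    · have := ih hq
      rw [tailCount_oddEvenRound_of_mod_eq _ k hqt]
      omega
    · obtain _ | p := q
      · rw [← oddEvenSort, tailCount_oddEvenSort_zero]
        omega
      · obtain rfl | hp := hq.eq_or_lt
        · simp
        · have := ih (q := p) (by omega)
          have := ih (q := p + 2) (by omega)
          rw [tailCount_oddEvenRound_succ _ k (by omega) hp]
          omega

theorem monotone_of_le_tailCount {w : Fin n → α}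
    (h : ∀ k, tailCount w k 0 ≤ tailCount w k (n - tailCount w k 0)) : Monotone w := by
  intro i j hij
  set m := tailCount w (w i) 0
  let upper : Finset (Fin n) := {x | w i ≤ w x}
  let last : Finset (Fin n) := {x | n - m ≤ x}
  let tail : Finset (Fin n) := {x | n - m ≤ x ∧ w i ≤ w x}
  have card_upper : #upper = m := by simp [upper, m, tailCount]
  have card_last : #{x : Fin n | n - m ≤ x} ≤ m := by
    have := card_filter_add_card_filter_not (s := univ) fun x : Fin n => (x : ℕ) < n - m
    simp only [not_lt, card_univ, Fintype.card_fin, Fin.card_filter_val_lt] at this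
    omega
  have tail_eq_upper : tail = upper :=
    eq_of_subset_of_card_le (by grind) (card_upper.trans_le (h (w i)))
  have tail_eq_last : tail = last :=
    eq_of_subset_of_card_le (by grind) (card_last.trans (h (w i)))
  have hi : i ∈ last := tail_eq_last ▸ tail_eq_upper ▸ by simp [upper]
  have hj : j ∈ last := by
    simp only [last, mem_filter, mem_univ, true_and] at hi ⊢
    exact hi.trans hij
  rw [← tail_eq_last, tail_eq_upper] at hj
  simpa [upper] using hj

theorem monotone_oddEvenSort (w : Fin n → α) : Monotone (oddEvenSort w n) := by
  refine monotone_of_le_tailCount fun k => ?_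
  have hm : tailCount w k 0 ≤ n := (card_le_univ _).trans_eq (Fintype.card_fin n)
  have := le_tailCount_oddEvenSort w k rfl n (n.sub_le (tailCount w k 0))
  rw [tailCount_oddEvenSort_zero]
  omega

theorem routable_pathGraph (n : ℕ) : Routable (pathGraph n) n := by
  intro σ
  obtain ⟨ρ, hρ, h⟩ := exists_oddEvenSort_eq_comp (σ⁻¹ : Perm (Fin n)) n
  have hsorted : Monotone (σ⁻¹ * ρ) := by
    rw [Perm.coe_mul, ← h]
    exact monotone_oddEvenSort _
  have : σ⁻¹ * ρ = 1 := (Perm.monotone_iff _).1 hsorted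
  rwa [inv_mul_eq_one.1 this]

end PathGraph

/-! ### Grids -/

section Grid

open SimpleGraph

/-- The `d`-dimensional cubic grid of side `n`: the relation `gridAdj n d` bundled as a graph, so
that `Routable` applies to it. -/
def gridGraph (n d : ℕ) : SimpleGraph (Fin d → Fin n) where
  Adj := gridAdj n d
  symm := ⟨fun _ _ ⟨i, hne, h⟩ => ⟨i, fun j hj => (hne j hj).symm, h.symm⟩⟩
  loopless := ⟨fun _ ⟨_, _, h⟩ => by omega⟩

/-- The one-dimensional grid is a path. -/
def pathGraphIsoGridGraph (n : ℕ) : pathGraph n ≃g gridGraph n 1 where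
  toEquiv := (Equiv.funUnique (Fin 1) (Fin n)).symm
  map_rel_iff' {a b} := by simp [gridGraph, gridAdj, pathGraph_adj]

/-- The grid of dimension `d + 1` is a box product, the first coordinate being the factor
`pathGraph n`. -/
def boxProdIsoGridGraph (n d : ℕ) : (pathGraph n).boxProd (gridGraph n d) ≃g
    gridGraph n (d + 1) where
  toEquiv := Fin.consEquiv fun _ => Fin n
  map_rel_iff' {a b} := by
    simp only [gridGraph, gridAdj, boxProd_adj, pathGraph_adj, Fin.consEquiv_apply, funext_iff,
      Fin.exists_fin_succ, Fin.forall_fin_succ, Fin.cons_zero, Fin.cons_succ, Fin.succ_inj,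
      Fin.succ_ne_zero, (Fin.succ_ne_zero _).symm, ne_eq, not_true_eq_false, not_false_eq_true,
      IsEmpty.forall_iff, forall_const, true_and]
    grind

theorem routable_gridGraph_succ (n d : ℕ) : Routable (gridGraph n (d + 1)) ((2 * d + 1) * n) := by
  induction d with
  | zero => simpa using (routable_pathGraph n).of_iso (pathGraphIsoGridGraph n)
  | succ d ih =>
    have := ((routable_pathGraph n).boxProd ih).of_iso (boxProdIsoGridGraph n (d + 1))
    convert this using 1
    ring

end Grid

/-- Recursive hypercube-sorting upper bound: every permutation of the `d`-dimensional
grid of side `n` (so `L = n^d` sites) is a product of at most `(2d-1)·n` layers of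
disjoint nearest-neighbour swaps, using at most `((2d-1)/2)·n^{d+1}` swaps in total. -/
theorem hypercube_sorting_bound (n d : ℕ) (hn : 0 < n) (hd : 0 < d)
    (σ : Equiv.Perm (Fin d → Fin n)) :
    ∃ l : List (Equiv.Perm (Fin d → Fin n)),
      σ = l.prod ∧
      (∀ π ∈ l, π * π = 1) ∧
      (∀ π ∈ l, ∀ v, π v = v ∨ gridAdj n d v (π v)) ∧
      l.length ≤ (2 * d - 1) * n ∧
      (l.map fun π => (π.support.card : ℚ) / 2).sum ≤
        ((2 * (d : ℚ) - 1) / 2) * (n : ℚ) ^ (d + 1) := by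
  obtain ⟨d, rfl⟩ := Nat.exists_eq_add_one.2 hd
  obtain ⟨l, hprod, hlayers, hlength⟩ :=
    exists_list_of_mem_layers_pow (routable_gridGraph_succ n d σ)
  refine ⟨l, hprod, fun π hπ => (hlayers π hπ).1, fun π hπ => (hlayers π hπ).2, hlength.le, ?_⟩
  refine (sum_card_support_div_two_le l).trans_eq ?_
  simp only [hlength, Fintype.card_fun, Fintype.card_fin]
  push_cast
  ring
end

section
/- Let d ≥ 1 and let μ be the Haar probability measure on the unitary group U(d) of d × d complex matrices. Then for all indices i, j, k, l : Fin d, ∫ U(i,j) · conj(U(k,l)) dμ(U) = (1/d) if i = k and j = l, and 0 otherwise. -/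
/-!
By left invariance the twirl `T(M) = ∫ U M U* dμ(U)` commutes with every unitary, in particular with
the reflections `1 - 2 E_{ii}` and with the permutation matrices `P_σ`. Hence it commutes with every
matrix unit `E_{ij} = E_{ii} P_{(i j)}` and is a scalar matrix; since conjugation preserves the
trace, the scalar is `tr M / d`. The integral of `U_{ij} conj(U_{kl})` is the `(i, k)` entry of
`T(E_{jl})`.
-/

open MeasureTheory Matrix

lemma single_mul_permMatrix {m n R : Type*} [DecidableEq m] [Fintype n] [DecidableEq n]
    [NonAssocSemiring R] (i : m) (j : n) (σ : Equiv.Perm n) (c : R) :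
    single i j c * σ.permMatrix R = single i (σ j) c := by
  rw [Equiv.Perm.permMatrix, PEquiv.mul_toMatrix_toPEquiv]
  ext a b
  simp [single_apply, Equiv.eq_symm_apply]

section Commutant

variable {n R : Type*} [Fintype n] [DecidableEq n] [CommRing R] [StarRing R]

lemma permMatrix_mem_unitaryGroup (σ : Equiv.Perm n) : σ.permMatrix R ∈ unitaryGroup n R := by
  rw [mem_unitaryGroup_iff, star_eq_conjTranspose, conjTranspose_permMatrix, ← permMatrix_mul,
    inv_mul_cancel, permMatrix_one]

lemma one_sub_single_two_mem_unitaryGroup (i : n) :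
    1 - single i i (2 : R) ∈ unitaryGroup n R := by
  have hstar : star (1 - single i i (2 : R)) = 1 - single i i 2 := by
    simp [star_eq_conjTranspose]
  rw [mem_unitaryGroup_iff, hstar, sub_mul, mul_sub, mul_sub, single_mul_single_same, two_mul,
    single_add]
  simp

lemma mem_range_scalar_of_forall_commute_unitary [Invertible (2 : R)] {M : Matrix n n R}
    (hM : ∀ U ∈ unitaryGroup n R, Commute U M) : M ∈ Set.range (scalar n) := by
  have hdiag (i : n) : Commute (single i i (1 : R)) M := by
    have hsub := (Commute.one_left M).sub_left (hM _ (one_sub_single_two_mem_unitaryGroup i))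
    simpa [smul_single] using hsub.smul_left (⅟2 : R)
  refine mem_range_scalar_of_commute_single fun i j _ => show Commute (single i j 1) M from ?_
  rw [← Equiv.swap_apply_left i j, ← single_mul_permMatrix]
  exact (hdiag i).mul_left (hM _ (permMatrix_mem_unitaryGroup _))

end Commutant

lemma linearMap_of_integral {m n X 𝕜 : Type*} [Finite m] [Finite n] [RCLike 𝕜]
    [MeasurableSpace X] {ν : Measure X} {F : X → Matrix m n 𝕜}
    (hF : ∀ i j, Integrable (fun x => F x i j) ν) (φ : Matrix m n 𝕜 →ₗ[𝕜] 𝕜) :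
    φ (of fun i j => ∫ x, F x i j ∂ν) = ∫ x, φ (F x) ∂ν := by
  classical
  have := Fintype.ofFinite m
  have := Fintype.ofFinite n
  have hφ (M : Matrix m n 𝕜) : φ M = ∑ i, ∑ j, M i j * φ (single i j 1) := by
    conv_lhs => rw [matrix_eq_sum_single M]
    simp_rw [map_sum, ← smul_eq_mul, ← map_smul, smul_single, smul_eq_mul, mul_one]
  have hterm (i : m) (j : n) : Integrable (fun x => F x i j * φ (single i j 1)) ν :=
    (hF i j).mul_const _
  calc φ (of fun i j => ∫ x, F x i j ∂ν)
      = ∑ i, ∑ j, ∫ x, F x i j * φ (single i j 1) ∂ν := by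
        simp only [hφ (of _), of_apply, integral_mul_const]
    _ = ∑ i, ∫ x, ∑ j, F x i j * φ (single i j 1) ∂ν := by
        simp only [integral_finsetSum _ fun j _ => hterm _ j]
    _ = ∫ x, ∑ i, ∑ j, F x i j * φ (single i j 1) ∂ν :=
        (integral_finsetSum _ fun i _ => integrable_finsetSum _ fun j _ => hterm i j).symm
    _ = ∫ x, φ (F x) ∂ν := by simp only [← hφ]

variable {n 𝕜 : Type*} [Fintype n] [DecidableEq n] [RCLike 𝕜]

instance compactSpace_unitaryGroup : CompactSpace (unitaryGroup n 𝕜) := by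
  let box : Set (Matrix n n 𝕜) :=
    Set.univ.pi fun _ => Set.univ.pi fun _ => Metric.closedBall 0 1
  have hbox : IsCompact box :=
    isCompact_univ_pi fun _ => isCompact_univ_pi fun _ => isCompact_closedBall 0 1
  have hsub : (unitaryGroup n 𝕜 : Set (Matrix n n 𝕜)) ⊆ box := fun U hU i _ j _ =>
    mem_closedBall_zero_iff.mpr (entry_norm_bound_of_unitary hU i j)
  exact isCompact_iff_compactSpace.mp (hbox.of_isClosed_subset isClosed_unitary hsub)

section Twirl

variable [MeasurableSpace (unitaryGroup n 𝕜)]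

/-- The twirl `∫ U M U* dμ(U)` of a matrix `M`, its average over conjugation by unitaries. The
integral is taken entrywise, so that no norm on matrices has to be chosen. -/
noncomputable def twirl (μ : Measure (unitaryGroup n 𝕜)) (M : Matrix n n 𝕜) : Matrix n n 𝕜 :=
  of fun i k => ∫ U : unitaryGroup n 𝕜, (U.1 * M * star U.1) i k ∂μ

lemma twirl_single_apply (μ : Measure (unitaryGroup n 𝕜)) (i j k l : n) :
    twirl μ (single j l 1) i k = ∫ U : unitaryGroup n 𝕜, U.1 i j * starRingEnd 𝕜 (U.1 k l) ∂μ := by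
  have hentry (U : Matrix n n 𝕜) :
      (U * single j l 1 * star U : Matrix n n 𝕜) i k = U i j * starRingEnd 𝕜 (U k l) := by
    simp [mul_apply, single_apply, star_apply, ite_and]
  simp only [twirl, of_apply, hentry]

variable [BorelSpace (unitaryGroup n 𝕜)] (μ : Measure (unitaryGroup n 𝕜)) [IsFiniteMeasure μ]
  (M : Matrix n n 𝕜)

lemma linearMap_twirl (φ : Matrix n n 𝕜 →ₗ[𝕜] 𝕜) :
    φ (twirl μ M) = ∫ U : unitaryGroup n 𝕜, φ (U.1 * M * star U.1) ∂μ :=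
  linearMap_of_integral (fun i k => Continuous.integrable_of_hasCompactSupport
    (Continuous.matrix_elem (by fun_prop) i k) (.of_compactSpace _)) φ

lemma trace_twirl : trace (twirl μ M) = μ.real Set.univ • trace M := by
  have hconj (U : unitaryGroup n 𝕜) : trace (U.1 * M * star U.1) = trace M := by
    rw [trace_mul_cycle, UnitaryGroup.star_mul_self, one_mul]
  simpa [hconj] using linearMap_twirl μ M (traceLinearMap n 𝕜 𝕜)

lemma commute_twirl [μ.IsMulLeftInvariant] (V : unitaryGroup n 𝕜) :
    Commute V.1 (twirl μ M) := by
  ext i k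
  calc (V.1 * twirl μ M) i k
      = ∫ U : unitaryGroup n 𝕜, (V.1 * (U.1 * M * star U.1)) i k ∂μ :=
        linearMap_twirl μ M (entryLinearMap 𝕜 𝕜 i k ∘ₗ LinearMap.mulLeft 𝕜 V.1)
    _ = ∫ U : unitaryGroup n 𝕜, ((V * U).1 * M * star (V * U).1 * V.1) i k ∂μ := by
        simp [mul_assoc]
    _ = ∫ U : unitaryGroup n 𝕜, (U.1 * M * star U.1 * V.1) i k ∂μ :=
        integral_mul_left_eq_self (fun U => (U.1 * M * star U.1 * V.1) i k) V
    _ = (twirl μ M * V.1) i k :=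
        (linearMap_twirl μ M (entryLinearMap 𝕜 𝕜 i k ∘ₗ LinearMap.mulRight 𝕜 V.1)).symm

end Twirl

theorem twirl_eq_scalar [Nonempty n] [MeasurableSpace (unitaryGroup n 𝕜)]
    [BorelSpace (unitaryGroup n 𝕜)] (μ : Measure (unitaryGroup n 𝕜)) [μ.IsMulLeftInvariant]
    [IsProbabilityMeasure μ] (M : Matrix n n 𝕜) :
    twirl μ M = scalar n (trace M / Fintype.card n) := by
  have : Invertible (2 : 𝕜) := invertibleOfNonzero two_ne_zero
  obtain ⟨c, hc⟩ := mem_range_scalar_of_forall_commute_unitary fun U hU =>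
    commute_twirl μ M ⟨U, hU⟩
  have htrace : trace M = Fintype.card n * c := by
    simpa [← hc] using (trace_twirl μ M).symm
  rw [← hc, htrace, mul_div_cancel_left₀ c (Nat.cast_ne_zero.mpr Fintype.card_ne_zero)]

theorem weingarten_first_moment_general [MeasurableSpace (unitaryGroup n 𝕜)]
    [BorelSpace (unitaryGroup n 𝕜)] (μ : Measure (unitaryGroup n 𝕜)) [μ.IsMulLeftInvariant]
    [IsProbabilityMeasure μ] (i j k l : n) :
    ∫ U : unitaryGroup n 𝕜, U.1 i j * starRingEnd 𝕜 (U.1 k l) ∂μ =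
      if i = k ∧ j = l then 1 / (Fintype.card n : 𝕜) else 0 := by
  have : Nonempty n := ⟨i⟩
  rw [← twirl_single_apply, twirl_eq_scalar]
  by_cases hik : i = k <;> by_cases hjl : j = l <;> simp [hik, hjl]

/-- Entrywise first-moment Weingarten formula: for Haar-random `U` in `U(d)`,
`∫ U_{ij} conj(U_{kl}) dμ = δ_{ik} δ_{jl} / d`. -/
theorem weingarten_first_moment (d : ℕ) (hd : 1 ≤ d)
    (μ : Measure (Matrix.unitaryGroup (Fin d) ℂ))
    [μ.IsHaarMeasure] [IsProbabilityMeasure μ]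
    (i j k l : Fin d) :
    (∫ U : Matrix.unitaryGroup (Fin d) ℂ,
        (U : Matrix (Fin d) (Fin d) ℂ) i j *
          (starRingEnd ℂ) ((U : Matrix (Fin d) (Fin d) ℂ) k l) ∂μ)
    = if i = k ∧ j = l then (1 : ℂ) / d else 0 := by
  simpa using weingarten_first_moment_general μ i j k l
end
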